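/- Let F be an infinite field, let u > r ≥ 2 be integers, and let 1 ≤ k ≤ r−1 and 1 ≤ l ≤ u−r. Let P be a partition whose Burge code is α^{u−r−l} β^{l} α^{r−k} β^{k} α. If x ∈ F^N is such that the Jordan type of M_x equals P, then every polynomial in E^Q_{k,l} vanishes at x, i.e., x ∈ X^Q_{k,l}. -/

import Mathlib

open Polynomial

noncomputable section

/-- The quotient module `F[t]/(t^m)`. -/
abbrev PQ (F : Type*) [Field F] (m : ℕ) : Type _ := F[X] ⧸ Ideal.span {(X : F[X]) ^ m}

variable (F : Type*) [Field F]

lemma mulQ_cond (m m' : ℕ) (c : F[X]) (h : (X : F[X]) ^ m' ∣ c * X ^ m) :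
    Ideal.span {(X : F[X]) ^ m} ≤
      Submodule.comap (LinearMap.mulLeft F[X] c) (Ideal.span {(X : F[X]) ^ m'}) := by
  rw [Ideal.span_le]
  intro x hx
  rw [Set.mem_singleton_iff] at hx
  subst hx
  simp only [SetLike.mem_coe, Submodule.mem_comap, LinearMap.mulLeft_apply]
  exact Ideal.mem_span_singleton.mpr h

/-- The `F`-linear map `F[t]/(t^m) → F[t]/(t^{m'})` induced by multiplication by the
polynomial `c`, well-defined whenever `t^{m'} ∣ c · t^m`. -/
def mulQ (m m' : ℕ) (c : F[X]) (h : (X : F[X]) ^ m' ∣ c * X ^ m) :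
    PQ F m →ₗ[F] PQ F m' :=
  LinearMap.restrictScalars F
    (Submodule.mapQ (Ideal.span {(X : F[X]) ^ m}) (Ideal.span {(X : F[X]) ^ m'})
      (LinearMap.mulLeft F[X] c) (mulQ_cond F m m' c h))

lemma dvd_A (u : ℕ) (c : F[X]) : (X : F[X]) ^ u ∣ c * X ^ u := Dvd.intro c (mul_comm _ _)

lemma dvd_G (u r : ℕ) (hru : r ≤ u) (g : F[X]) :
    (X : F[X]) ^ u ∣ (X ^ r * g) * X ^ (u - r) := by
  refine Dvd.intro g ?_
  rw [mul_comm ((X:F[X])^r) g, mul_assoc, ← pow_add, Nat.add_sub_cancel' hru, mul_comm]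

lemma dvd_H (u r : ℕ) (h : F[X]) : (X : F[X]) ^ (u - r) ∣ h * X ^ u :=
  Dvd.dvd.mul_left (pow_dvd_pow _ (Nat.sub_le u r)) h

/-- The `F[t]`-module endomorphism of `V = F[t]/(t^u) ⊕ t^r·F[t]/(t^u)` given by
`M(v₁, v₂) = (a v₁ + g v₂, h t^r v₁ + b v₂)`, where the second summand
`t^r·F[t]/(t^u)` is identified with `F[t]/(t^{u-r})` via `w ↦ t^r w`
(so the lower-left entry becomes `v₁ ↦ h v₁ mod t^{u-r}` and the upper-right
entry becomes `w ↦ t^r g w mod t^u`). -/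
def Mmap (u r : ℕ) (hru : r ≤ u) (a g h b : F[X]) :
    (PQ F u × PQ F (u - r)) →ₗ[F] (PQ F u × PQ F (u - r)) :=
  LinearMap.prod
    ((mulQ F u u a (dvd_A F u a)).comp (LinearMap.fst F (PQ F u) (PQ F (u - r))) +
      (mulQ F (u - r) u (X ^ r * g) (dvd_G F u r hru g)).comp
        (LinearMap.snd F (PQ F u) (PQ F (u - r))))
    ((mulQ F u (u - r) h (dvd_H F u r h)).comp (LinearMap.fst F (PQ F u) (PQ F (u - r))) +
      (mulQ F (u - r) (u - r) b (dvd_A F (u - r) b)).comp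
        (LinearMap.snd F (PQ F u) (PQ F (u - r))))

/-- `B` has Jordan type `P` (a partition given as the multiset of its parts):
the corank of every power of `B` is the one prescribed by `P`, i.e.
`dim ker (B^s) = Σ_i min(pᵢ, s)` for all `s ≥ 0`. -/
def JordanTypeIs {V : Type*} [AddCommGroup V] [Module F V] (B : Module.End F V)
    (P : Multiset ℕ) : Prop :=
  ∀ s : ℕ, Module.finrank F (LinearMap.ker (B ^ s)) = (P.map fun p => min p s).sum

/-- Index type for the `N = 4u-3r-2` coordinates
`(a_1,…,a_{u−1}, b_1,…,b_{u−r−1}, g_0,…,g_{u−r−1}, h_0,…,h_{u−r−1})`. -/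
abbrev Vars (u r : ℕ) : Type := Fin (u - 1) ⊕ Fin (u - r - 1) ⊕ Fin (u - r) ⊕ Fin (u - r)

/-- `a = Σ_{i=1}^{u−1} a_i t^i`. -/
def paOf (u r : ℕ) (x : Vars u r → F) : F[X] :=
  ∑ i : Fin (u - 1), C (x (Sum.inl i)) * X ^ ((i : ℕ) + 1)

/-- `b = Σ_{i=1}^{u−r−1} b_i t^i`. -/
def pbOf (u r : ℕ) (x : Vars u r → F) : F[X] :=
  ∑ i : Fin (u - r - 1), C (x (Sum.inr (Sum.inl i))) * X ^ ((i : ℕ) + 1)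

/-- `g = Σ_{i=0}^{u−r−1} g_i t^i`. -/
def pgOf (u r : ℕ) (x : Vars u r → F) : F[X] :=
  ∑ i : Fin (u - r), C (x (Sum.inr (Sum.inr (Sum.inl i)))) * X ^ (i : ℕ)

/-- `h = Σ_{i=0}^{u−r−1} h_i t^i`. -/
def phOf (u r : ℕ) (x : Vars u r → F) : F[X] :=
  ∑ i : Fin (u - r), C (x (Sum.inr (Sum.inr (Sum.inr i)))) * X ^ (i : ℕ)

/-- The nilpotent endomorphism `M_x` of `V` determined by the point `x ∈ F^N`. -/
def Mx (u r : ℕ) (hru : r ≤ u) (x : Vars u r → F) :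
    Module.End F (PQ F u × PQ F (u - r)) :=
  Mmap F u r hru (paOf F u r x) (pgOf F u r x) (phOf F u r x) (pbOf F u r x)

/-- The variable `a_i` as a polynomial function on `F^N` (meaningful for `1 ≤ i ≤ u-1`). -/
def Av (u r : ℕ) (i : ℕ) : MvPolynomial (Vars u r) F :=
  if h : i - 1 < u - 1 then MvPolynomial.X (Sum.inl ⟨i - 1, h⟩) else 0

/-- The variable `b_i` as a polynomial function on `F^N` (meaningful for `1 ≤ i ≤ u-r-1`). -/
def Bv (u r : ℕ) (i : ℕ) : MvPolynomial (Vars u r) F :=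
  if h : i - 1 < u - r - 1 then MvPolynomial.X (Sum.inr (Sum.inl ⟨i - 1, h⟩)) else 0

/-- The variable `g_i` as a polynomial function on `F^N` (meaningful for `0 ≤ i ≤ u-r-1`). -/
def Gv (u r : ℕ) (i : ℕ) : MvPolynomial (Vars u r) F :=
  if h : i < u - r then MvPolynomial.X (Sum.inr (Sum.inr (Sum.inl ⟨i, h⟩))) else 0

/-- The variable `h_i` as a polynomial function on `F^N` (meaningful for `0 ≤ i ≤ u-r-1`). -/
def Hv (u r : ℕ) (i : ℕ) : MvPolynomial (Vars u r) F :=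
  if h : i < u - r then MvPolynomial.X (Sum.inr (Sum.inr (Sum.inr ⟨i, h⟩))) else 0

/-- The set of polynomials `E^Q_{k,l}` for `Q = (u, u-r)`:
`{a_1,…,a_{k−1}, b_1,…,b_{l−1}}` if `k+l ≤ r`, and
`{a_1,…,a_{k−1}, b_1,…,b_{r−k−1}}` together with the quadratic polynomials
`Σ_{j=0}^{m} a_{k+j} b_{r−k+m−j} − Σ_{j=0}^{m} g_j h_{m−j}` for `0 ≤ m ≤ k+l−r−1`
if `k+l ≥ r+1`. -/
def Eset (u r k l : ℕ) : Set (MvPolynomial (Vars u r) F) :=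
  if k + l ≤ r then
    {p | ∃ i, 1 ≤ i ∧ i ≤ k - 1 ∧ p = Av F u r i} ∪
      {p | ∃ i, 1 ≤ i ∧ i ≤ l - 1 ∧ p = Bv F u r i}
  else
    {p | ∃ i, 1 ≤ i ∧ i ≤ k - 1 ∧ p = Av F u r i} ∪
      {p | ∃ i, 1 ≤ i ∧ i ≤ r - k - 1 ∧ p = Bv F u r i} ∪
      {p | ∃ m, m ≤ k + l - r - 1 ∧ p =
        (∑ j ∈ Finset.range (m + 1), Av F u r (k + j) * Bv F u r (r - k + m - j)) -
          (∑ j ∈ Finset.range (m + 1), Gv F u r j * Hv F u r (m - j))}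

/-- The common zero locus in `F^N` of a set `T` of polynomials. -/
def zLocus (u r : ℕ) (T : Set (MvPolynomial (Vars u r) F)) : Set (Vars u r → F) :=
  {x | ∀ p ∈ T, MvPolynomial.eval x p = 0}

/-- `X^Q_{k,l}`, the common zero locus of `E^Q_{k,l}`. -/
def Xlocus (u r k l : ℕ) : Set (Vars u r → F) := zLocus F u r (Eset F u r k l)

/-- Zariski-closed subsets of `F^N`: common zero loci of sets of polynomials. -/
def IsZClosed (u r : ℕ) (S : Set (Vars u r → F)) : Prop :=
  ∃ T : Set (MvPolynomial (Vars u r) F), S = zLocus F u r T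

/-- The Zariski closure of a subset of `F^N`. -/
def zClosure (u r : ℕ) (S : Set (Vars u r → F)) : Set (Vars u r → F) :=
  ⋂₀ {C | IsZClosed F u r C ∧ S ⊆ C}

end

section Burge

/-- Scanning the frequency sequence `f` downward from `j`, forming backward pairs:
whenever `f j > 0` (and `j` has not been consumed by a previously formed pair),
put `j` in the set and consume the index `j - 1`. -/
def RsetGo (f : ℕ → ℕ) : ℕ → Finset ℕ
  | 0 => ∅
  | 1 => if 0 < f 1 then {1} else ∅
  | (j + 2) => if 0 < f (j + 2) then insert (j + 2) (RsetGo f j) else RsetGo f (j + 1)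

/-- The set `R(P)` of a partition `P` (given as the multiset of its parts, with
frequency sequence `j ↦ P.count j`); the scan starts at the largest part `P.sup`. -/
def Rset (P : Multiset ℕ) : Finset ℕ := RsetGo (fun j => P.count j) P.sup

/-- The partition `∂P`: for each `j ∈ R(P)` one copy of the part `j` is replaced by
`j - 1` (discarded when `j - 1 = 0`). -/
def dP (P : Multiset ℕ) : Multiset ℕ :=
  (P - (Rset P).val) + (((Rset P).val.map fun j => j - 1).filter fun j => 0 < j)

/-- Fuel-driven computation of the Burge code; `false` stands for `α`, `true` for `β`.
(The fuel `P.sum + 1` used in `burgeCode` always suffices, since `∂` strictly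
decreases the size of a nonempty partition.) -/
def burgeGo : ℕ → Multiset ℕ → List Bool
  | 0, _ => []
  | (n + 1), P =>
    if P = 0 then [false]
    else (if 1 ∈ Rset P then true else false) :: burgeGo n (dP P)

/-- The Burge code of the partition `P`: the word `w_1 ⋯ w_m` with `w_i = β` (`true`)
if `∂^{i-1} P` is in class `B` (i.e. `1 ∈ R(∂^{i-1}P)`) and `w_i = α` (`false`)
otherwise, where `m = min { i : ∂^{i-1} P = (0) }`. -/
def burgeCode (P : Multiset ℕ) : List Bool := burgeGo (P.sum + 1) P

/-- The almost rectangular partition `[m]^k` of `m` into `k` parts, each equal to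
`⌈m/k⌉` or `⌊m/k⌋`. -/
def arPart (m k : ℕ) : Multiset ℕ :=
  Multiset.replicate (m % k) (m / k + 1) + Multiset.replicate (k - m % k) (m / k)

/-- Greedy decomposition of a weakly decreasing list of parts into maximal
almost rectangular segments from the top (fuel-driven helper). -/
def greedyGo : ℕ → List ℕ → List (List ℕ)
  | 0, _ => []
  | _ + 1, [] => []
  | n + 1, p :: rest =>
    ((p :: rest).takeWhile fun q => decide (p ≤ q + 1)) ::
      greedyGo n ((p :: rest).dropWhile fun q => decide (p ≤ q + 1))

/-- The greedy decomposition of a weakly decreasing list of parts into maximal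
almost rectangular subpartitions from the top. -/
def greedy (l : List ℕ) : List (List ℕ) := greedyGo l.length l

end Burge

/-!
The operation `∂` on partitions is one time step of a box–ball system: the coranks
`s ↦ ∑ min(pᵢ, s)` of `P` and of `∂P` satisfy the ultradiscrete Hirota equation, which determines
those of `P` from those of `∂P` and the first letter of the Burge code. For a code made of two
blocks the solution is an explicit minimum of four terms, `twoBlockCorank`.

On the other hand, the corank of `M_x ^ s` is the `t`-adic order of the ideal of `2 × 2` minors of
`(t^u, 0)`, `(0, t^{u-r})` and the two columns of the `s`-th power of the matrix of `M_x`. The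
orders of the entries of that power are governed by the orders of `a`, `b`, `g` and `h`. Comparing
the two formulas at the first exponents at which the corank falls below its maximal growth
`s * (k + l)` gives `t^k ∣ a` and `t^{min(l, r-k)} ∣ b`, while `s = 1` gives
`t^{k+l} ∣ ab - t^r g h`. These divisibilities are exactly the vanishing of `E^Q_{k,l}`.
-/

section BurgeCode

lemma mem_RsetGo (f : ℕ → ℕ) : ∀ n j : ℕ,
    j ∈ RsetGo f n ↔ 1 ≤ j ∧ j ≤ n ∧ 0 < f j ∧ j + 1 ∉ RsetGo f n
  | 0, j => by
    simp only [RsetGo, Finset.notMem_empty, false_iff]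
    omega
  | 1, j => by
    rw [RsetGo]
    split_ifs <;> simp only [Finset.mem_singleton, Finset.notMem_empty] <;> grind
  | n + 2, j => by
    have ih := mem_RsetGo f n
    rw [RsetGo]
    split_ifs with hn
    · have : n + 1 ∉ RsetGo f n := fun h ↦ by have := (ih _).1 h; omega
      have : n + 3 ∉ RsetGo f n := fun h ↦ by have := (ih _).1 h; omega
      simp only [Finset.mem_insert]
      grind
    · rw [mem_RsetGo f (n + 1) j]
      grind

lemma mem_Rset {P : Multiset ℕ} {j : ℕ} : j ∈ Rset P ↔ 1 ≤ j ∧ j ∈ P ∧ j + 1 ∉ Rset P := by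
  rw [Rset, mem_RsetGo, Multiset.count_pos]
  exact ⟨fun ⟨h, _, h'⟩ ↦ ⟨h, h'⟩, fun ⟨h, h'⟩ ↦ ⟨h, Multiset.le_sup h'.1, h'⟩⟩

lemma one_le_of_mem_Rset {P : Multiset ℕ} {j : ℕ} (h : j ∈ Rset P) : 1 ≤ j := (mem_Rset.1 h).1

lemma Rset_val_le (P : Multiset ℕ) : (Rset P).val ≤ P :=
  (Multiset.le_iff_subset (Rset P).nodup).2 fun _ hj ↦ (mem_Rset.1 hj).2.1

lemma Rset_nonempty {P : Multiset ℕ} (h0 : 0 ∉ P) (hP : P ≠ 0) : (Rset P).Nonempty := by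
  obtain ⟨a, ha⟩ := Multiset.exists_mem_of_ne_zero hP
  by_cases h : a + 1 ∈ Rset P
  · exact ⟨_, h⟩
  · exact ⟨a, mem_Rset.2 ⟨Nat.pos_of_ne_zero fun e ↦ h0 (e ▸ ha), ha, h⟩⟩

lemma zero_notMem_dP {P : Multiset ℕ} (h0 : 0 ∉ P) : 0 ∉ dP P := by
  rw [dP, Multiset.mem_add]
  rintro (h | h)
  · exact h0 (Multiset.mem_of_le (Multiset.sub_le_self _ _) h)
  · simp at h

lemma mem_dP {P : Multiset ℕ} {j : ℕ} :
    j ∈ dP P ↔ j ∈ P - (Rset P).val ∨ 1 ≤ j ∧ j + 1 ∈ Rset P := by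
  simp only [dP, Multiset.mem_add, Multiset.mem_filter, Multiset.mem_map, Finset.mem_val]
  grind

/-- Scanning from below: `∂P` and the bottom of `R(P)` determine all of `R(P)`. -/
lemma succ_mem_Rset_iff {P : Multiset ℕ} {j : ℕ} (hj : 1 ≤ j) :
    j + 1 ∈ Rset P ↔ j ∈ dP P ∧ j ∉ Rset P := by
  rw [mem_dP]
  refine ⟨fun h ↦ ⟨Or.inr ⟨hj, h⟩, fun h' ↦ (mem_Rset.1 h').2.2 h⟩, fun ⟨h, h'⟩ ↦ ?_⟩
  rcases h with h | h
  · by_contra hs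
    exact h' (mem_Rset.2 ⟨hj, Multiset.mem_of_le (Multiset.sub_le_self _ _) h, hs⟩)
  · exact h.2

lemma sum_map_dP (P : Multiset ℕ) {g : ℕ → ℕ} (g0 : g 0 = 0) :
    ((dP P).map g).sum + ∑ j ∈ Rset P, g j = (P.map g).sum + ∑ j ∈ Rset P, g (j - 1) := by
  have drop_zeros (T : Multiset ℕ) : ((T.filter (0 < ·)).map g).sum = (T.map g).sum := by
    induction T using Multiset.induction_on with
    | empty => rfl
    | cons a T ih => rcases a.eq_zero_or_pos with rfl | ha <;> simp [*]
  have split_P : (P.map g).sum = ((P - (Rset P).val).map g).sum + ∑ j ∈ Rset P, g j := by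
    conv_lhs => rw [← Multiset.sub_add_cancel (Rset_val_le P)]
    rw [Multiset.map_add, Multiset.sum_add, Finset.sum_map_val]
  rw [dP, Multiset.map_add, Multiset.sum_add, drop_zeros, Multiset.map_map, split_P,
    Finset.sum_eq_multiset_sum (Rset P) fun j ↦ g (j - 1)]
  exact add_right_comm _ _ _

lemma sum_dP_add_card (P : Multiset ℕ) : (dP P).sum + (Rset P).card = P.sum := by
  have h := sum_map_dP P (g := id) rfl
  have hR : ∑ j ∈ Rset P, j = ∑ j ∈ Rset P, (j - 1) + (Rset P).card := by
    rw [Finset.card_eq_sum_ones, ← Finset.sum_add_distrib]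
    exact Finset.sum_congr rfl fun j hj ↦ (Nat.sub_add_cancel (one_le_of_mem_Rset hj)).symm
  simp only [id, Multiset.map_id'] at h
  omega

lemma sum_dP_lt {P : Multiset ℕ} (h0 : 0 ∉ P) (hP : P ≠ 0) : (dP P).sum < P.sum := by
  have := sum_dP_add_card P
  have := (Rset_nonempty h0 hP).card_pos
  omega

lemma burgeGo_eq_of_sum_lt {P : Multiset ℕ} (h0 : 0 ∉ P) {n m : ℕ} (hn : P.sum < n)
    (hm : P.sum < m) : burgeGo n P = burgeGo m P := by
  induction n generalizing P m with
  | zero => omega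
  | succ n ih =>
    obtain ⟨m, rfl⟩ := Nat.exists_eq_succ_of_ne_zero (by omega : m ≠ 0)
    by_cases hP : P = 0
    · simp only [burgeGo, hP, if_true]
    · have := sum_dP_lt h0 hP
      simp only [burgeGo, if_neg hP, ih (zero_notMem_dP h0) (m := m) (by omega) (by omega)]

lemma burgeCode_zero : burgeCode 0 = [false] := rfl

lemma burgeCode_of_ne_zero {P : Multiset ℕ} (h0 : 0 ∉ P) (hP : P ≠ 0) :
    burgeCode P = decide (1 ∈ Rset P) :: burgeCode (dP P) := by
  rw [burgeCode, burgeGo, if_neg hP, burgeCode,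
    burgeGo_eq_of_sum_lt (zero_notMem_dP h0) (sum_dP_lt h0 hP) (Nat.lt_succ_self _)]
  by_cases h : 1 ∈ Rset P <;> simp [h]

lemma burgeCode_ne_nil (P : Multiset ℕ) : burgeCode P ≠ [] := by
  rw [burgeCode, burgeGo]
  split_ifs <;> exact List.cons_ne_nil _ _

lemma eq_zero_of_burgeCode_eq_singleton {P : Multiset ℕ} (h0 : 0 ∉ P) {b : Bool}
    (h : burgeCode P = [b]) : P = 0 := by
  by_contra hP
  rw [burgeCode_of_ne_zero h0 hP] at h
  exact burgeCode_ne_nil _ (List.cons.inj h).2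

lemma burgeCode_eq_cons {P : Multiset ℕ} (h0 : 0 ∉ P) {b : Bool} {w : List Bool}
    (h : burgeCode P = b :: w) (hw : w ≠ []) :
    (1 ∈ Rset P ↔ b = true) ∧ burgeCode (dP P) = w := by
  have hP : P ≠ 0 := by
    rintro rfl
    exact hw (List.cons.inj (burgeCode_zero.symm.trans h)).2.symm
  rw [burgeCode_of_ne_zero h0 hP] at h
  obtain ⟨rfl, rfl⟩ := List.cons.inj h
  exact ⟨decide_eq_true_iff.symm, rfl⟩

end BurgeCode

section Hirota

/-- `∑ p ∈ P, min p s`, the dimension of `ker (B ^ s)` when `B` has Jordan type `P`. -/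
def minSum (P : Multiset ℕ) (s : ℕ) : ℕ := (P.map fun p ↦ min p s).sum

lemma minSum_zero_right (P : Multiset ℕ) : minSum P 0 = 0 := by simp [minSum]

lemma minSum_zero_left (s : ℕ) : minSum 0 s = 0 := rfl

lemma minSum_add_minSum_add_count (P : Multiset ℕ) (s : ℕ) :
    minSum P s + minSum P (s + 2) + P.count (s + 1) = 2 * minSum P (s + 1) := by
  unfold minSum
  induction P using Multiset.induction_on with
  | empty => rfl
  | cons a T ih =>
    simp only [Multiset.map_cons, Multiset.sum_cons, Multiset.count_cons]
    split_ifs <;> omega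

lemma minSum_eq_minSum_dP_add_card (P : Multiset ℕ) (s : ℕ) :
    minSum P s = minSum (dP P) s + ((Rset P).filter (· ≤ s)).card := by
  have h := sum_map_dP P (g := fun p ↦ min p s) (Nat.zero_min s)
  have hR : ∑ j ∈ Rset P, min j s
      = ∑ j ∈ Rset P, min (j - 1) s + ((Rset P).filter (· ≤ s)).card := by
    rw [Finset.card_filter, ← Finset.sum_add_distrib]
    refine Finset.sum_congr rfl fun j hj ↦ ?_
    have := one_le_of_mem_Rset hj
    split_ifs <;> omega
  unfold minSum
  omega

lemma card_filter_le_succ (R : Finset ℕ) (s : ℕ) :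
    (R.filter (· ≤ s + 1)).card = (R.filter (· ≤ s)).card + if s + 1 ∈ R then 1 else 0 := by
  split_ifs with h
  · rw [← Finset.card_insert_of_notMem (s := R.filter (· ≤ s)) (a := s + 1) (by simp)]
    congr 1
    grind
  · rw [add_zero]
    congr 1
    grind

lemma minSum_succ_add_minSum_dP (P : Multiset ℕ) (s : ℕ) :
    minSum P (s + 1) + minSum (dP P) s =
      minSum P s + minSum (dP P) (s + 1) + if s + 1 ∈ Rset P then 1 else 0 := by
  have := card_filter_le_succ (Rset P) s
  rw [minSum_eq_minSum_dP_add_card P (s + 1), minSum_eq_minSum_dP_add_card P s]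
  omega

/-- The ultradiscrete bilinear (Hirota) equation of the box–ball system. -/
lemma minSum_hirota (P : Multiset ℕ) (s : ℕ) :
    minSum P (s + 2) + minSum (dP P) s =
      min (minSum P s + minSum (dP P) (s + 2) + 1) (minSum P (s + 1) + minSum (dP P) (s + 1)) := by
  have h1 := minSum_succ_add_minSum_dP P s
  have h2 := minSum_succ_add_minSum_dP P (s + 1)
  have hc := minSum_add_minSum_add_count (dP P) s
  have hpos : 0 < (dP P).count (s + 1) ↔ s + 1 ∈ dP P := Multiset.count_pos
  have hR := succ_mem_Rset_iff (P := P) (Nat.le_add_left 1 s)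
  split_ifs at h1 h2 <;> grind

lemma minSum_eq_of_hirota {P : Multiset ℕ} {b : Bool} (hb : 1 ∈ Rset P ↔ b = true) {J K : ℕ → ℕ}
    (hK : ∀ s, minSum (dP P) s = K s) (J0 : J 0 = 0) (J1 : J 1 = K 1 + b.toNat)
    (hJ : ∀ s, J (s + 2) + K s = min (J s + K (s + 2) + 1) (J (s + 1) + K (s + 1))) :
    ∀ s, minSum P s = J s
  | 0 => by rw [minSum_zero_right, J0]
  | 1 => by
    have h := minSum_succ_add_minSum_dP P 0
    rw [minSum_zero_right, minSum_zero_right, hK, zero_add] at h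
    cases b <;> simp_all
  | s + 2 => by
    have h := minSum_hirota P s
    rw [minSum_eq_of_hirota hb hK J0 J1 hJ s, minSum_eq_of_hirota hb hK J0 J1 hJ (s + 1),
      hK, hK, hK] at h
    have := hJ s
    omega

/-- The word `α ^ (x - k) β ^ min x k`: one almost rectangular block of a Burge code. -/
def blockWord (k x : ℕ) : List Bool :=
  List.replicate (x - k) false ++ List.replicate (min x k) true

lemma blockWord_zero (k : ℕ) : blockWord k 0 = [] := by simp [blockWord]

lemma blockWord_succ (k x : ℕ) : blockWord k (x + 1) = decide (x < k) :: blockWord k x := by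
  unfold blockWord
  rcases lt_or_ge x k with h | h
  · rw [Nat.sub_eq_zero_of_le h, Nat.sub_eq_zero_of_le h.le, Nat.min_eq_left h,
      Nat.min_eq_left h.le, List.replicate_succ, decide_eq_true h]
    rfl
  · rw [Nat.succ_sub h, Nat.min_eq_right h, Nat.min_eq_right (Nat.le_succ_of_le h),
      List.replicate_succ, decide_eq_false h.not_gt]
    rfl

lemma minSum_of_burgeCode_eq_blockWord {k x : ℕ} {P : Multiset ℕ} (h0 : 0 ∉ P)
    (hP : burgeCode P = blockWord k x ++ [false]) (s : ℕ) : minSum P s = min (s * k) x := by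
  induction x generalizing P s with
  | zero =>
    rw [blockWord_zero] at hP
    rw [eq_zero_of_burgeCode_eq_singleton h0 hP, minSum_zero_left, Nat.min_zero]
  | succ x ih =>
    rw [blockWord_succ] at hP
    obtain ⟨hb, hP'⟩ := burgeCode_eq_cons h0 hP (by simp)
    refine minSum_eq_of_hirota (J := fun s ↦ min (s * k) (x + 1)) hb
      (ih (zero_notMem_dP h0) hP') (by simp) ?_ (fun s ↦ ?_) s
    · rcases lt_or_ge x k with h | h
      · rw [decide_eq_true h, Bool.toNat_true]
        omega
      · rw [decide_eq_false h.not_gt, Bool.toNat_false]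
        omega
    · simp only [add_mul]
      generalize s * k = S
      omega

/-- The coranks of the powers of a nilpotent endomorphism whose Jordan type has Burge code
`α ^ (v - l) β ^ l α ^ (r - k) β ^ k α`: a two-soliton solution of `minSum_hirota`. The truncated
subtraction in `s - 1` is harmless, as the first term of the minimum vanishes for `s = 0`. -/
def twoBlockCorank (k l r v s : ℕ) : ℕ :=
  min (min (s * (k + l)) (v + s * k))
    (min (v + (r - min l (r - k) + (s - 1) * min l (r - k))) (2 * v + r))

lemma twoBlockCorank_zero (k l r v : ℕ) : twoBlockCorank k l r v 0 = 0 := by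
  simp [twoBlockCorank]

lemma twoBlockCorank_one {k r : ℕ} (l v : ℕ) (hk : k ≤ r) :
    twoBlockCorank k l r v 1 = k + min l v := by
  simp only [twoBlockCorank]
  omega

lemma min_min_min_spec {α : Type*} [LinearOrder α] (a b c d : α) :
    (min (min a b) (min c d) ≤ a ∧ min (min a b) (min c d) ≤ b ∧
      min (min a b) (min c d) ≤ c ∧ min (min a b) (min c d) ≤ d) ∧
    (min (min a b) (min c d) = a ∨ min (min a b) (min c d) = b ∨
      min (min a b) (min c d) = c ∨ min (min a b) (min c d) = d) := by
  grind

lemma min3_hirota {v A b d p k : ℕ} (hp : 2 * k ≤ p) (h : 2 * b + 2 * k ≤ A + d) :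
    min (min (A + 2 * p) (v + 1 + (b + 2 * k))) (2 * (v + 1) + d) +
        min (min A (v + b)) (2 * v + d) =
      min (min (min A (v + 1 + b)) (2 * (v + 1) + d) +
            min (min (A + 2 * p) (v + (b + 2 * k))) (2 * v + d) + 1)
        (min (min (A + p) (v + 1 + (b + k))) (2 * (v + 1) + d) +
            min (min (A + p) (v + (b + k))) (2 * v + d)) := by
  rcases le_or_gt A (v + b) with h1 | h1
  · rw [min_eq_left (by omega : A ≤ v + 1 + b), min_eq_left h1,
      min_eq_left (by omega : A ≤ 2 * v + d), min_eq_left (by omega : A ≤ 2 * (v + 1) + d)]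
    omega
  · rw [min_eq_right (by omega : v + 1 + b ≤ A), min_eq_right h1.le,
      min_eq_right (by omega : v + 1 + (b + k) ≤ A + p),
      min_eq_right (by omega : v + (b + k) ≤ A + p),
      min_eq_right (by omega : v + 1 + (b + 2 * k) ≤ A + 2 * p),
      min_eq_right (by omega : v + (b + 2 * k) ≤ A + 2 * p)]
    omega

lemma min4_hirota {v A b c d k l : ℕ} (hlk : l ≤ k) (h : A + d = b + c + 2 * l) :
    min (min (A + 2 * (k + l)) (v + 1 + (b + 2 * k)))
          (min (v + 1 + (c + 2 * l)) (2 * (v + 1) + d)) +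
        min (min A (v + b)) (min (v + c) (2 * v + d)) =
      min (min (min A (v + 1 + b)) (min (v + 1 + c) (2 * (v + 1) + d)) +
            min (min (A + 2 * (k + l)) (v + (b + 2 * k))) (min (v + (c + 2 * l)) (2 * v + d)) + 1)
        (min (min (A + (k + l)) (v + 1 + (b + k))) (min (v + 1 + (c + l)) (2 * (v + 1) + d)) +
            min (min (A + (k + l)) (v + (b + k))) (min (v + (c + l)) (2 * v + d))) := by
  obtain ⟨hx₀, hx₀'⟩ := min_min_min_spec A (v + b) (v + c) (2 * v + d)
  obtain ⟨hx₁, hx₁'⟩ := min_min_min_spec (A + (k + l)) (v + (b + k)) (v + (c + l)) (2 * v + d)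
  obtain ⟨hx₂, hx₂'⟩ :=
    min_min_min_spec (A + 2 * (k + l)) (v + (b + 2 * k)) (v + (c + 2 * l)) (2 * v + d)
  obtain ⟨hy₀, hy₀'⟩ := min_min_min_spec A (v + 1 + b) (v + 1 + c) (2 * (v + 1) + d)
  obtain ⟨hy₁, hy₁'⟩ :=
    min_min_min_spec (A + (k + l)) (v + 1 + (b + k)) (v + 1 + (c + l)) (2 * (v + 1) + d)
  obtain ⟨hy₂, hy₂'⟩ := min_min_min_spec (A + 2 * (k + l)) (v + 1 + (b + 2 * k))
    (v + 1 + (c + 2 * l)) (2 * (v + 1) + d)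
  refine le_antisymm (le_min ?_ ?_) (min_le_iff.2 ?_)
  · clear hx₀' hx₁ hx₁' hx₂ hy₀ hy₁ hy₁' hy₂'
    rcases hx₂' with e | e | e | e <;> rcases hy₀' with e' | e' | e' | e' <;> rw [e, e'] <;> omega
  · clear hx₀' hx₁ hx₂ hx₂' hy₀ hy₀' hy₁ hy₂'
    rcases hx₁' with e | e | e | e <;> rcases hy₁' with e' | e' | e' | e' <;> rw [e, e'] <;> omega
  · clear hx₀ hx₁' hx₂' hy₀' hy₁' hy₂
    rcases hx₀' with e | e | e | e <;> rcases hy₂' with e' | e' | e' | e' <;> rw [e, e'] <;> omega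

lemma twoBlockCorank_zero_size {k r : ℕ} (hk : k ≤ r) (l s : ℕ) :
    twoBlockCorank k l r 0 s = min (s * k) r := by
  unfold twoBlockCorank
  match s with
  | 0 => simp
  | 1 => omega
  | s + 2 =>
    simp only [show s + 2 - 1 = s + 1 by omega, add_mul, mul_add]
    omega

lemma twoBlockCorank_of_le_min {k l r : ℕ} (h : k ≤ min l (r - k)) (v s : ℕ) :
    twoBlockCorank k l r v s = min (min (s * (k + l)) (v + s * k)) (2 * v + r) := by
  cases s with
  | zero => simp [twoBlockCorank]
  | succ s =>
    have : s * k ≤ s * min l (r - k) := Nat.mul_le_mul_left _ h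
    rw [twoBlockCorank, ← min_assoc, min_eq_left (b := v + (_ + _))]
    exact min_le_of_right_le (by rw [Nat.succ_mul, Nat.add_sub_cancel]; omega)

lemma twoBlockCorank_succ_of_sub_le {k l r : ℕ} (hkr : k ≤ r) (hl : r - k ≤ l) (hk : r - k ≤ k)
    (v s : ℕ) : twoBlockCorank k l r v (s + 1) =
      min (min ((s + 1) * (k + l)) (v + (k + s * (r - k)))) (2 * v + r) := by
  have : s * (r - k) ≤ s * k := Nat.mul_le_mul_left _ hk
  rw [twoBlockCorank, min_eq_right hl, Nat.sub_sub_self hkr, Nat.add_sub_cancel, ← min_assoc,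
    min_assoc _ (v + (s + 1) * k), min_eq_right (a := v + (s + 1) * k)]
  rw [add_mul]
  omega

lemma twoBlockCorank_hirota {k r : ℕ} (l : ℕ) (hk : k ≤ r) (v : ℕ) : ∀ s,
    twoBlockCorank k l r (v + 1) (s + 2) + twoBlockCorank k l r v s =
      min (twoBlockCorank k l r (v + 1) s + twoBlockCorank k l r v (s + 2) + 1)
        (twoBlockCorank k l r (v + 1) (s + 1) + twoBlockCorank k l r v (s + 1))
  | 0 => by
    rw [twoBlockCorank_zero, twoBlockCorank_zero, zero_add, twoBlockCorank_one _ _ hk,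
      twoBlockCorank_one _ _ hk]
    simp only [twoBlockCorank]
    omega
  | s + 1 => by
    rcases le_or_gt k (min l (r - k)) with hmin | hmin
    · have hkl : (s + 1) * k ≤ (s + 1) * l := Nat.mul_le_mul_left _ (by omega)
      simp only [twoBlockCorank_of_le_min hmin, add_mul (s + 1), one_mul]
      exact min3_hirota (by omega) (by rw [mul_add]; omega)
    have hs (n : ℕ) : (s + 2 + 1) * n = (s + 1) * n + 2 * n := by ring
    rcases le_total l (r - k) with hl | hl
    · simp only [twoBlockCorank, min_eq_left hl, Nat.add_sub_cancel, Nat.add_right_comm s 1 2, hs,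
        add_mul (s + 1), add_mul s 2 l, add_mul s 1 l, one_mul, ← add_assoc (r - l)]
      exact min4_hirota (by omega : l ≤ k) (by simp only [add_mul, mul_add]; omega)
    · have hl' : s * (r - k) ≤ s * l := Nat.mul_le_mul_left _ hl
      have hk' : s * (r - k) ≤ s * k := Nat.mul_le_mul_left _ (by omega)
      simp only [Nat.add_right_comm s 1 2, twoBlockCorank_succ_of_sub_le hk hl (by omega), hs,
        add_mul (s + 1), add_mul s 2 (r - k), add_mul s 1 (r - k), one_mul, ← add_assoc k]
      exact min3_hirota (by omega : 2 * (r - k) ≤ k + l)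
        (by simp only [add_mul, mul_add]; omega)

lemma minSum_of_burgeCode_eq_blockWord_append {k l r v : ℕ} (hk : k ≤ r) {P : Multiset ℕ}
    (h0 : 0 ∉ P) (hP : burgeCode P = blockWord l v ++ (blockWord k r ++ [false])) (s : ℕ) :
    minSum P s = twoBlockCorank k l r v s := by
  induction v generalizing P s with
  | zero =>
    rw [blockWord_zero, List.nil_append] at hP
    rw [minSum_of_burgeCode_eq_blockWord h0 hP, twoBlockCorank_zero_size hk]
  | succ v ih =>
    rw [blockWord_succ] at hP
    obtain ⟨hb, hP'⟩ := burgeCode_eq_cons h0 hP (by simp)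
    refine minSum_eq_of_hirota hb (ih (zero_notMem_dP h0) hP') (twoBlockCorank_zero ..) ?_
      (twoBlockCorank_hirota l hk v) s
    rw [twoBlockCorank_one _ _ hk, twoBlockCorank_one _ _ hk]
    rcases lt_or_ge v l with h | h
    · rw [decide_eq_true h, Bool.toNat_true]
      omega
    · rw [decide_eq_false h.not_gt, Bool.toNat_false]
      omega

end Hirota

section Minors

variable {R : Type*} [CommRing R]

/-- The `2 × 2` determinant with rows `x` and `y`. -/
def wedge : (R × R) →ₗ[R] (R × R) →ₗ[R] R :=
  LinearMap.mk₂ R (fun x y ↦ x.1 * y.2 - x.2 * y.1)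
    (fun _ _ _ ↦ by simp only [Prod.fst_add, Prod.snd_add]; ring)
    (fun _ _ _ ↦ by simp only [Prod.smul_fst, Prod.smul_snd, smul_eq_mul]; ring)
    (fun _ _ _ ↦ by simp only [Prod.fst_add, Prod.snd_add]; ring)
    (fun _ _ _ ↦ by simp only [Prod.smul_fst, Prod.smul_snd, smul_eq_mul]; ring)

lemma wedge_apply (x y : R × R) : wedge x y = x.1 * y.2 - x.2 * y.1 := rfl

lemma wedge_self (x : R × R) : wedge x x = 0 := by rw [wedge_apply]; ring

lemma wedge_swap (x y : R × R) : wedge y x = -wedge x y := by simp only [wedge_apply]; ring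

/-- The ideal of `2 × 2` minors of a submodule `S` of `R²`, that is, the Fitting ideal of
`R² ⧸ S`. -/
def minorsIdeal (S : Submodule R (R × R)) : Ideal R := Submodule.map₂ wedge S S

lemma minorsIdeal_span_le_iff {s : Set (R × R)} {I : Ideal R} :
    minorsIdeal (Submodule.span R s) ≤ I ↔ ∀ x ∈ s, ∀ y ∈ s, wedge x y ∈ I := by
  rw [minorsIdeal, Submodule.map₂_span_span, Submodule.span_le, Set.image2_subset_iff]
  rfl

lemma minorsIdeal_span_pair (x y : R × R) :
    minorsIdeal (Submodule.span R {x, y}) = Ideal.span {wedge x y} := by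
  refine le_antisymm (minorsIdeal_span_le_iff.2 ?_) ?_
  · have hxy := Ideal.mem_span_singleton_self (wedge x y)
    rintro z (rfl | rfl) w (rfl | rfl)
    · simp only [wedge_self, zero_mem]
    · exact hxy
    · exact wedge_swap w z ▸ neg_mem hxy
    · simp only [wedge_self, zero_mem]
  · rw [Ideal.span_singleton_le_iff_mem]
    exact Submodule.apply_mem_map₂ _ (Submodule.subset_span (.inl rfl))
      (Submodule.subset_span (.inr rfl))

lemma minorsIdeal_top : minorsIdeal (⊤ : Submodule R (R × R)) = ⊤ := by
  rw [Ideal.eq_top_iff_one]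
  have h : wedge ((1, 0) : R × R) (0, 1) = 1 := by simp [wedge_apply]
  exact h ▸ Submodule.apply_mem_map₂ _ trivial trivial

lemma finrank_eq_of_minorsIdeal_ne_bot [IsDomain R] [IsPrincipalIdealRing R]
    {S : Submodule R (R × R)} (hS : minorsIdeal S ≠ ⊥) :
    Module.finrank R S = Module.finrank R (R × R) := by
  refine le_antisymm (Submodule.finrank_le S) ?_
  obtain ⟨x, hx, y, hy, hxy⟩ : ∃ x ∈ S, ∃ y ∈ S, wedge x y ≠ 0 := by
    by_contra! h
    exact hS (le_bot_iff.1 (Submodule.map₂_le.2 h))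
  have hli : LinearIndependent R ![(⟨x, hx⟩ : S), ⟨y, hy⟩] := by
    refine LinearIndependent.pair_iff.2 fun s t hst ↦ ?_
    have hst' : s • x + t • y = 0 := congrArg Subtype.val hst
    have hs : s • wedge x y = 0 := by
      simpa [wedge_self, -smul_eq_mul] using congrArg (wedge · y) hst'
    have ht : t • wedge x y = 0 := by
      simpa [wedge_self, -smul_eq_mul] using congrArg (wedge x) hst'
    exact ⟨(smul_eq_zero_iff_left hxy).1 hs, (smul_eq_zero_iff_left hxy).1 ht⟩
  simpa using hli.fintype_card_le_finrank

lemma span_basis_pair {M : Type*} [AddCommGroup M] [Module R M]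
    (b : Module.Basis (Fin 2) R M) : Submodule.span R {b 0, b 1} = ⊤ := by
  rw [← b.span_eq, ← Set.image_univ, ← Finset.coe_univ, Finset.univ_fin2]
  simp only [Finset.coe_insert, Finset.coe_singleton, Set.image_pair]

lemma minorsIdeal_eq_span_of_basis {S : Submodule R (R × R)} (b : Module.Basis (Fin 2) R (R × R))
    (c : Module.Basis (Fin 2) R S) {a : Fin 2 → R} (hc : ∀ i, (c i : R × R) = a i • b i) :
    minorsIdeal S = Ideal.span {a 0 * a 1} := by
  have hb : Ideal.span {wedge (b 0) (b 1)} = ⊤ := by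
    rw [← minorsIdeal_span_pair, span_basis_pair, minorsIdeal_top]
  have hS : S = Submodule.span R {a 0 • b 0, a 1 • b 1} := by
    have := congrArg (Submodule.map S.subtype) (span_basis_pair c)
    rwa [Submodule.map_span, Set.image_pair, Submodule.map_subtype_top, Submodule.subtype_apply,
      Submodule.subtype_apply, hc, hc, eq_comm] at this
  have hwedge : wedge (a 0 • b 0) (a 1 • b 1) = a 0 * a 1 * wedge (b 0) (b 1) := by
    rw [map_smul, LinearMap.map_smul₂, smul_smul, smul_eq_mul, mul_comm (a 1)]
  rw [hS, minorsIdeal_span_pair, hwedge, ← Ideal.span_singleton_mul_span_singleton, hb,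
    Ideal.mul_top]

theorem finrank_quotient_eq_natDegree_of_minorsIdeal {F : Type*} [Field F]
    {S : Submodule F[X] (F[X] × F[X])} {d : F[X]} (hd : d ≠ 0)
    (hS : minorsIdeal S = Ideal.span {d}) :
    Module.finrank F ((F[X] × F[X]) ⧸ S) = d.natDegree := by
  have hrank := finrank_eq_of_minorsIdeal_ne_bot
    (hS.trans_ne (mt Ideal.span_singleton_eq_bot.1 hd))
  let b := Module.Basis.finTwoProd F[X]
  set a := Submodule.smithNormalFormCoeffs b hrank
  have ha := Submodule.smithNormalFormCoeffs_ne_zero b hrank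
  have hminors := minorsIdeal_eq_span_of_basis _ _ (Submodule.smithNormalFormBotBasis_def b hrank)
  rw [hS, Ideal.span_singleton_eq_span_singleton] at hminors
  have hfin (i) : Module.Finite F (F[X] ⧸ Ideal.span {a i}) := by
    exact (AdjoinRoot.powerBasis (ha i)).finite
  rw [Submodule.finrank_quotient_eq_sum F b hrank, Fin.sum_univ_two,
    finrank_quotient_span_eq_natDegree, finrank_quotient_span_eq_natDegree,
    natDegree_eq_of_degree_eq (degree_eq_degree_of_associated hminors),
    natDegree_mul (ha 0) (ha 1)]

lemma minorsIdeal_span_insert_le_iff {x : R × R} {s : Set (R × R)} {I : Ideal R} :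
    minorsIdeal (Submodule.span R (insert x s)) ≤ I ↔
      (∀ y ∈ s, wedge x y ∈ I) ∧ minorsIdeal (Submodule.span R s) ≤ I := by
  rw [minorsIdeal_span_le_iff, minorsIdeal_span_le_iff]
  simp only [Set.forall_mem_insert, wedge_self, zero_mem, true_and]
  refine and_congr_right fun hx ↦ forall₂_congr fun y hy ↦ and_iff_right ?_
  exact wedge_swap x y ▸ neg_mem (hx y hy)

variable {F : Type*} [Field F]

lemma le_finrank_quotient_iff_minorsIdeal_le {S : Submodule F[X] (F[X] × F[X])} {m : ℕ}
    (hm : X ^ m ∈ minorsIdeal S) (n : ℕ) :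
    n ≤ Module.finrank F ((F[X] × F[X]) ⧸ S) ↔ minorsIdeal S ≤ Ideal.span {X ^ n} := by
  obtain ⟨d, hd⟩ := IsPrincipalIdealRing.principal (minorsIdeal S)
  rw [hd, Ideal.submodule_span_eq, Ideal.mem_span_singleton, dvd_prime_pow prime_X] at hm
  obtain ⟨c, -, hc⟩ := hm
  rw [Ideal.submodule_span_eq, Ideal.span_singleton_eq_span_singleton.2 hc] at hd
  rw [finrank_quotient_eq_natDegree_of_minorsIdeal (pow_ne_zero c X_ne_zero) hd, natDegree_X_pow,
    hd, Ideal.span_singleton_le_span_singleton, pow_dvd_pow_iff X_ne_zero not_isUnit_X]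

lemma finrank_ker_eq_finrank_quotient {A V W : Type*} [Ring A] [Algebra F A] [AddCommGroup V]
    [Module F V] [Module.Finite F V] [AddCommGroup W] [Module F W] [Module A W]
    [IsScalarTower F A W] {M : Module.End F V} {π : W →ₗ[F] V} (hπ : Function.Surjective π)
    {S : Submodule A W} (hS : ∀ z, z ∈ S ↔ π z ∈ LinearMap.range M) :
    Module.finrank F (LinearMap.ker M) = Module.finrank F (W ⧸ S) := by
  have hker : LinearMap.ker ((LinearMap.range M).mkQ ∘ₗ π) = S.restrictScalars F := by
    ext z
    rw [LinearMap.mem_ker, LinearMap.comp_apply, Submodule.mkQ_apply,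
      Submodule.Quotient.mk_eq_zero, Submodule.restrictScalars_mem, hS]
  have hquot := (LinearMap.quotKerEquivOfSurjective ((LinearMap.range M).mkQ ∘ₗ π)
    ((Submodule.mkQ_surjective _).comp hπ)).finrank_eq
  rw [hker] at hquot
  have hrange := (LinearMap.range M).finrank_quotient_add_finrank
  have hker_range := M.finrank_range_add_finrank_ker
  have hS' : Module.finrank F (W ⧸ S) = Module.finrank F (W ⧸ S.restrictScalars F) := rfl
  omega

end Minors

section Powers

variable {R : Type*} [CommRing R]

/-- The matrix `[[a, y], [z, b]]` with its off-diagonal entries rescaled so that the lower one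
becomes `1`; `t` stands for the product `y * z`. All powers are rescaled in the same way. -/
def rescaledMatrix (a b t : R) : Matrix (Fin 2) (Fin 2) R := !![a, t; 1, b]

variable (a b t : R) (s : ℕ)

lemma rescaledMatrix_pow_succ_zero_zero :
    (rescaledMatrix a b t ^ (s + 1)) 0 0 =
      a * (rescaledMatrix a b t ^ s) 0 0 + t * (rescaledMatrix a b t ^ s) 1 0 := by
  rw [pow_succ', Matrix.mul_apply, Fin.sum_univ_two]; rfl

lemma rescaledMatrix_pow_succ_one_zero :
    (rescaledMatrix a b t ^ (s + 1)) 1 0 =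
      (rescaledMatrix a b t ^ s) 0 0 + b * (rescaledMatrix a b t ^ s) 1 0 := by
  rw [pow_succ', Matrix.mul_apply, Fin.sum_univ_two]
  simp [rescaledMatrix]

lemma rescaledMatrix_pow_succ_one_zero' :
    (rescaledMatrix a b t ^ (s + 1)) 1 0 =
      a * (rescaledMatrix a b t ^ s) 1 0 + (rescaledMatrix a b t ^ s) 1 1 := by
  rw [pow_succ, Matrix.mul_apply, Fin.sum_univ_two]
  simp [rescaledMatrix, mul_comm]

lemma rescaledMatrix_pow_succ_one_one :
    (rescaledMatrix a b t ^ (s + 1)) 1 1 =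
      t * (rescaledMatrix a b t ^ s) 1 0 + b * (rescaledMatrix a b t ^ s) 1 1 := by
  rw [pow_succ, Matrix.mul_apply, Fin.sum_univ_two]
  simp [rescaledMatrix, mul_comm]

lemma rescaledMatrix_pow_zero_one :
    (rescaledMatrix a b t ^ s) 0 1 = t * (rescaledMatrix a b t ^ s) 1 0 := by
  induction s with
  | zero => simp
  | succ s ih =>
    rw [rescaledMatrix_pow_succ_one_zero', pow_succ', Matrix.mul_apply, Fin.sum_univ_two, ih]
    change a * (t * _) + t * _ = _
    ring

lemma rescaledMatrix_pow_det :
    (rescaledMatrix a b t ^ s) 0 0 * (rescaledMatrix a b t ^ s) 1 1 -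
      t * (rescaledMatrix a b t ^ s) 1 0 ^ 2 = (a * b - t) ^ s := by
  have h : (rescaledMatrix a b t ^ s).det = (a * b - t) ^ s := by
    rw [Matrix.det_pow, rescaledMatrix, Matrix.det_fin_two_of, mul_one]
  rw [← h, Matrix.det_fin_two, rescaledMatrix_pow_zero_one]
  ring

end Powers

noncomputable section Corank

variable (F : Type*) [Field F]

/-- The projection of `F[t]²` onto `V = F[t]/(t^u) ⊕ F[t]/(t^{u-r})`. -/
def projPQ (u r : ℕ) : (F[X] × F[X]) →ₗ[F] (PQ F u × PQ F (u - r)) :=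
  LinearMap.prodMap ((Ideal.span {(X : F[X]) ^ u}).mkQ.restrictScalars F)
    ((Ideal.span {(X : F[X]) ^ (u - r)}).mkQ.restrictScalars F)

/-- The dimension of the kernel of `M ^ s`, where `M` is the endomorphism of `V` with entries
`a`, `t^r g`, `h` and `b`. -/
def powCorank (u r : ℕ) (hru : r ≤ u) (a g h b : F[X]) (s : ℕ) : ℕ :=
  Module.finrank F (LinearMap.ker (Mmap F u r hru a g h b ^ s))

variable {F}

lemma projPQ_surjective (u r : ℕ) : Function.Surjective (projPQ F u r) :=
  (Submodule.mkQ_surjective _).prodMap (Submodule.mkQ_surjective _)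

lemma projPQ_eq_zero_iff {u r : ℕ} {z : F[X] × F[X]} :
    projPQ F u r z = 0 ↔ X ^ u ∣ z.1 ∧ X ^ (u - r) ∣ z.2 := by
  change ((Submodule.Quotient.mk z.1, Submodule.Quotient.mk z.2) : PQ F u × PQ F (u - r)) = 0 ↔ _
  rw [Prod.mk_eq_zero, Submodule.Quotient.mk_eq_zero, Submodule.Quotient.mk_eq_zero,
    Ideal.mem_span_singleton, Ideal.mem_span_singleton]

lemma Mmap_projPQ (u r : ℕ) (hru : r ≤ u) (a g h b : F[X]) (z : F[X] × F[X]) :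
    Mmap F u r hru a g h b (projPQ F u r z) =
      projPQ F u r (a * z.1 + X ^ r * g * z.2, h * z.1 + b * z.2) := rfl

lemma Mmap_pow_projPQ (u r : ℕ) (hru : r ≤ u) (a g h b : F[X]) (s : ℕ) (z : F[X] × F[X]) :
    (Mmap F u r hru a g h b ^ s) (projPQ F u r z) =
      projPQ F u r
        (z.1 • ((rescaledMatrix a b (X ^ r * g * h) ^ s) 0 0,
            h * (rescaledMatrix a b (X ^ r * g * h) ^ s) 1 0) +
          z.2 • (X ^ r * g * (rescaledMatrix a b (X ^ r * g * h) ^ s) 1 0,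
            (rescaledMatrix a b (X ^ r * g * h) ^ s) 1 1)) := by
  induction s generalizing z with
  | zero => simp
  | succ s ih =>
    rw [pow_succ, Module.End.mul_apply, Mmap_projPQ, ih]
    congr 1
    refine Prod.ext ?_ ?_
    · simp only [Prod.fst_add, Prod.smul_fst, smul_eq_mul, rescaledMatrix_pow_succ_zero_zero,
        rescaledMatrix_pow_succ_one_zero]
      ring
    · simp only [Prod.snd_add, Prod.smul_snd, smul_eq_mul, rescaledMatrix_pow_succ_one_zero',
        rescaledMatrix_pow_succ_one_one]
      ring

lemma mem_span_iff_projPQ_mem_range {u r : ℕ} {M : Module.End F (PQ F u × PQ F (u - r))}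
    {x y : F[X] × F[X]}
    (hM : ∀ z, M (projPQ F u r z) = projPQ F u r (z.1 • x + z.2 • y)) (z : F[X] × F[X]) :
    z ∈ Submodule.span F[X] {(X ^ u, 0), (0, X ^ (u - r)), x, y} ↔
      projPQ F u r z ∈ LinearMap.range M := by
  have hrange : projPQ F u r z ∈ LinearMap.range M ↔
      ∃ w : F[X] × F[X], projPQ F u r (z - (w.1 • x + w.2 • y)) = 0 := by
    simp only [LinearMap.mem_range, (projPQ_surjective u r).exists, hM, map_sub, sub_eq_zero,
      eq_comm (a := projPQ F u r z)]
  rw [hrange]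
  simp only [Submodule.mem_span_insert, Submodule.mem_span_singleton, projPQ_eq_zero_iff]
  constructor
  · rintro ⟨c, _, ⟨d, _, ⟨p, _, ⟨q, rfl⟩, rfl⟩, rfl⟩, rfl⟩
    exact ⟨(p, q), ⟨c, by simp [mul_comm]⟩, ⟨d, by simp [mul_comm]⟩⟩
  · rintro ⟨w, ⟨c, hc⟩, ⟨d, hd⟩⟩
    refine ⟨c, _, ⟨d, _, ⟨w.1, _, ⟨w.2, rfl⟩, rfl⟩, rfl⟩, ?_⟩
    refine Prod.ext ?_ ?_
    · simp only [Prod.fst_sub, Prod.fst_add, Prod.smul_fst, smul_eq_mul, Prod.smul_mk, mul_zero,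
        zero_add] at hc ⊢
      linear_combination hc
    · simp only [Prod.snd_sub, Prod.snd_add, Prod.smul_snd, smul_eq_mul, Prod.smul_mk, mul_zero,
        zero_add] at hd ⊢
      linear_combination hd

theorem le_powCorank_iff (u r : ℕ) (hru : r ≤ u) (a g h b : F[X]) (s n : ℕ) :
    n ≤ powCorank F u r hru a g h b s ↔
      n ≤ u + (u - r) ∧
      X ^ n ∣ X ^ u * (h * (rescaledMatrix a b (X ^ r * g * h) ^ s) 1 0) ∧
      X ^ n ∣ X ^ u * (rescaledMatrix a b (X ^ r * g * h) ^ s) 1 1 ∧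
      X ^ n ∣ X ^ (u - r) * (rescaledMatrix a b (X ^ r * g * h) ^ s) 0 0 ∧
      X ^ n ∣ X ^ u * (g * (rescaledMatrix a b (X ^ r * g * h) ^ s) 1 0) ∧
      X ^ n ∣ (a * b - X ^ r * g * h) ^ s := by
  have hfin (m : ℕ) : Module.Finite F (PQ F m) := (monic_X_pow m).finite_quotient
  have hmem := mem_span_iff_projPQ_mem_range (Mmap_pow_projPQ u r hru a g h b s)
  rw [← rescaledMatrix_pow_det]
  set A := (rescaledMatrix a b (X ^ r * g * h) ^ s) 0 0
  set B := (rescaledMatrix a b (X ^ r * g * h) ^ s) 1 1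
  set p := (rescaledMatrix a b (X ^ r * g * h) ^ s) 1 0
  rw [powCorank, finrank_ker_eq_finrank_quotient (projPQ_surjective u r) hmem,
    le_finrank_quotient_iff_minorsIdeal_le (m := u + (u - r))]
  · simp only [minorsIdeal_span_insert_le_iff, minorsIdeal_span_pair, Set.forall_mem_insert,
      Set.mem_singleton_iff, forall_eq, Ideal.span_singleton_le_span_singleton,
      Ideal.mem_span_singleton]
    have hgp : X ^ (u - r) * (X ^ r * g * p) = X ^ u * (g * p) := by
      rw [← mul_assoc, ← mul_assoc, ← pow_add, Nat.sub_add_cancel hru, mul_assoc]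
    have hdet : h * p * (X ^ r * g * p) = X ^ r * g * h * p ^ 2 := by ring
    have hpow : (X : F[X]) ^ n ∣ X ^ (u + (u - r)) ↔ n ≤ u + (u - r) :=
      pow_dvd_pow_iff X_ne_zero not_isUnit_X
    simp only [wedge_apply, zero_mul, mul_zero, sub_zero, zero_sub, dvd_neg, ← pow_add, hpow,
      hgp, hdet, and_assoc]
  · have h : wedge ((X : F[X]) ^ u, 0) (0, X ^ (u - r)) = X ^ (u + (u - r)) := by
      simp [wedge_apply, pow_add]
    exact h ▸ Submodule.apply_mem_map₂ _ (Submodule.subset_span (.inl rfl))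
      (Submodule.subset_span (.inr (.inl rfl)))

end Corank

section PowerOrders

variable {R : Type*} [CommRing R] {a b t x : R}

lemma pow_dvd_mul_of_le_add {y : R} {k m n : ℕ} (ha : x ^ m ∣ a) (hy : x ^ n ∣ y)
    (hk : k ≤ m + n) : x ^ k ∣ a * y :=
  (pow_dvd_pow x hk).trans (pow_add x m n ▸ mul_dvd_mul ha hy)

lemma pow_dvd_rescaledMatrix_pow_succ {e : ℕ} (ha : x ^ e ∣ a) (hb : x ^ e ∣ b)
    (ht : x ^ (2 * e) ∣ t) (s : ℕ) :
    x ^ (s * e) ∣ (rescaledMatrix a b t ^ (s + 1)) 1 0 ∧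
      x ^ ((s + 1) * e) ∣ (rescaledMatrix a b t ^ (s + 1)) 1 1 := by
  induction s with
  | zero => simpa [rescaledMatrix] using hb
  | succ s ih =>
    rw [rescaledMatrix_pow_succ_one_zero', rescaledMatrix_pow_succ_one_one a b t (s + 1)]
    exact ⟨dvd_add (pow_dvd_mul_of_le_add ha ih.1 (by linarith)) ih.2,
      dvd_add (pow_dvd_mul_of_le_add ht ih.1 (by linarith))
        (pow_dvd_mul_of_le_add hb ih.2 (by linarith))⟩

lemma pow_dvd_rescaledMatrix_pow_sub_pow {e τ : ℕ} (ha : x ^ e ∣ a) (hb : x ^ e ∣ b)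
    (ht : x ^ τ ∣ t) (hτ : 2 * e ≤ τ) (s : ℕ) :
    x ^ (τ + s * e) ∣ (rescaledMatrix a b t ^ (s + 2)) 0 0 - a ^ (s + 2) := by
  induction s with
  | zero => simpa [rescaledMatrix, pow_two] using ht
  | succ s ih =>
    have hp := (pow_dvd_rescaledMatrix_pow_succ ha hb ((pow_dvd_pow x hτ).trans ht) (s + 1)).1
    have hsplit : (rescaledMatrix a b t ^ (s + 1 + 2)) 0 0 - a ^ (s + 1 + 2) =
        a * ((rescaledMatrix a b t ^ (s + 2)) 0 0 - a ^ (s + 2)) +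
          t * (rescaledMatrix a b t ^ (s + 2)) 1 0 := by
      rw [show s + 1 + 2 = s + 2 + 1 from rfl, rescaledMatrix_pow_succ_zero_zero]
      ring
    rw [hsplit]
    exact dvd_add (pow_dvd_mul_of_le_add ha ih (by linarith))
      (pow_dvd_mul_of_le_add ht hp le_rfl)

lemma pow_dvd_rescaledMatrix_pow_succ_sub_pow {j : ℕ} (ha : x ^ (j + 1) ∣ a) (hb : x ^ j ∣ b)
    (ht : x ^ (2 * j + 1) ∣ t) (s : ℕ) :
    x ^ (s * j + 1) ∣ (rescaledMatrix a b t ^ (s + 1)) 1 0 - b ^ s ∧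
      x ^ ((s + 1) * j + 1) ∣ (rescaledMatrix a b t ^ (s + 1)) 1 1 - b ^ (s + 1) := by
  induction s with
  | zero => simp [rescaledMatrix]
  | succ s ih =>
    have hp := (pow_dvd_rescaledMatrix_pow_succ ((pow_dvd_pow x j.le_succ).trans ha) hb
      ((pow_dvd_pow x (2 * j).le_succ).trans ht) s).1
    rw [rescaledMatrix_pow_succ_one_zero', rescaledMatrix_pow_succ_one_one a b t (s + 1),
      add_sub_assoc, add_sub_assoc, pow_succ' b (s + 1), ← mul_sub]
    exact ⟨dvd_add (pow_dvd_mul_of_le_add ha hp (by linarith)) ih.2,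
      dvd_add (pow_dvd_mul_of_le_add ht hp (by linarith))
        (pow_dvd_mul_of_le_add hb ih.2 (by linarith))⟩

lemma pow_dvd_rescaledMatrix_pow_sub_pow_sub_mul_pow {j τ : ℕ} (ha : x ^ (j + 1) ∣ a)
    (hb : x ^ j ∣ b) (ht : x ^ τ ∣ t) (hτ : 2 * j < τ) (s : ℕ) :
    x ^ (τ + s * j + 1) ∣
      (rescaledMatrix a b t ^ (s + 2)) 0 0 - a ^ (s + 2) - t * b ^ s := by
  cases s with
  | zero => simp [rescaledMatrix, pow_two]
  | succ s =>
    have hp := (pow_dvd_rescaledMatrix_pow_succ_sub_pow ha hb ((pow_dvd_pow x hτ).trans ht)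
      (s + 1)).1
    have hA := pow_dvd_rescaledMatrix_pow_sub_pow ((pow_dvd_pow x j.le_succ).trans ha) hb ht
      hτ.le s
    have hsplit : (rescaledMatrix a b t ^ (s + 1 + 2)) 0 0 - a ^ (s + 1 + 2) - t * b ^ (s + 1) =
        a * ((rescaledMatrix a b t ^ (s + 2)) 0 0 - a ^ (s + 2)) +
          t * ((rescaledMatrix a b t ^ (s + 2)) 1 0 - b ^ (s + 1)) := by
      rw [show s + 1 + 2 = s + 2 + 1 from rfl, rescaledMatrix_pow_succ_zero_zero]
      ring
    rw [hsplit]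
    exact dvd_add (pow_dvd_mul_of_le_add ha hA (by linarith))
      (pow_dvd_mul_of_le_add ht hp (by linarith))

end PowerOrders

section Emultiplicity

lemma emultiplicity_eq_of_pow_succ_dvd_sub {R : Type*} [CommRing R] {x p q : R} {m : ℕ}
    (hq : emultiplicity x q = m) (h : x ^ (m + 1) ∣ p - q) : emultiplicity x p = m := by
  rw [emultiplicity_eq_coe] at hq ⊢
  rw [dvd_iff_dvd_of_dvd_sub h, dvd_iff_dvd_of_dvd_sub ((pow_dvd_pow x m.le_succ).trans h)]
  exact hq

lemma le_add_of_pow_dvd_pow_mul {R : Type*} [CommRing R] [IsDomain R] {x p : R} (hx : Prime x)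
    {m n w : ℕ} (hp : emultiplicity x p = m) (h : x ^ n ∣ x ^ w * p) : n ≤ w + m := by
  rw [pow_dvd_iff_le_emultiplicity, emultiplicity_mul hx,
    emultiplicity_pow_self_of_prime hx, hp] at h
  exact_mod_cast h

lemma exists_le_pow_dvd_emultiplicity {R : Type*} [Monoid R] (x p : R) (N : ℕ) :
    ∃ n ≤ N, x ^ n ∣ p ∧ (n < N → emultiplicity x p = n) := by
  by_cases h : x ^ N ∣ p
  · exact ⟨N, le_rfl, h, fun hN ↦ absurd hN (lt_irrefl N)⟩
  · rw [pow_dvd_iff_le_emultiplicity, not_le] at h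
    lift emultiplicity x p to ℕ using h.ne_top with n hn
    refine ⟨n, by exact_mod_cast h.le, pow_dvd_of_le_emultiplicity hn.le, fun _ ↦ rfl⟩

end Emultiplicity

section CorankBounds

variable {F : Type*} [Field F] {u r : ℕ} {a g h b : F[X]} {d i j e γ η : ℕ}

lemma le_powCorank_add_two (hru : r ≤ u) (hδ : X ^ d ∣ a * b - X ^ r * g * h) (ha : X ^ i ∣ a)
    (hb : X ^ e ∣ b) (hei : e ≤ i) (her : 2 * e ≤ r) (hg : X ^ γ ∣ g) (hγ : γ ≤ e)
    (hh : X ^ η ∣ h) (hη : η ≤ e) (s : ℕ) :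
    min (min ((s + 2) * d) (u - r + (s + 2) * i)) (min (u + (γ + η) + s * e) (u + (u - r))) ≤
      powCorank F u r hru a g h b (s + 2) := by
  set n := min (min ((s + 2) * d) (u - r + (s + 2) * i)) (min (u + (γ + η) + s * e) (u + (u - r)))
  have hna : n ≤ u - r + (s + 2) * i := (min_le_left _ _).trans (min_le_right _ _)
  have hne : n ≤ u + (γ + η) + s * e := (min_le_right _ _).trans (min_le_left _ _)
  have ha' : X ^ e ∣ a := (pow_dvd_pow X hei).trans ha
  have ht : X ^ (r + (γ + η)) ∣ X ^ r * g * h := by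
    rw [mul_assoc]
    exact pow_dvd_mul_of_le_add dvd_rfl (pow_dvd_mul_of_le_add hg hh le_rfl) le_rfl
  obtain ⟨hp, hB⟩ := pow_dvd_rescaledMatrix_pow_succ ha' hb
    ((pow_dvd_pow X (her.trans le_self_add)).trans ht) (s + 1)
  have hA := pow_dvd_rescaledMatrix_pow_sub_pow ha' hb ht (her.trans le_self_add) s
  refine (le_powCorank_iff u r hru a g h b (s + 2) n).2 ⟨(min_le_right _ _).trans
    (min_le_right _ _), ?_, ?_, ?_, ?_, ?_⟩
  · exact pow_dvd_mul_of_le_add dvd_rfl (pow_dvd_mul_of_le_add hh hp le_rfl) (by linarith)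
  · exact pow_dvd_mul_of_le_add dvd_rfl hB (by linarith)
  · rw [← sub_add_cancel ((rescaledMatrix a b (X ^ r * g * h) ^ (s + 2)) 0 0) (a ^ (s + 2)),
      mul_add]
    refine dvd_add (pow_dvd_mul_of_le_add dvd_rfl hA (by omega)) ?_
    exact pow_dvd_mul_of_le_add dvd_rfl (pow_mul' (X : F[X]) (s + 2) i ▸ pow_dvd_pow_of_dvd ha _)
      hna
  · exact pow_dvd_mul_of_le_add dvd_rfl (pow_dvd_mul_of_le_add hg hp le_rfl) (by linarith)
  · refine (pow_dvd_pow X ((min_le_left _ _).trans (min_le_left _ _))).trans ?_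
    exact pow_mul' (X : F[X]) (s + 2) d ▸ pow_dvd_pow_of_dvd hδ _

lemma emultiplicity_X_pow_of_eq {p : F[X]} {m : ℕ} (hp : emultiplicity X p = m) (s : ℕ) :
    emultiplicity X (p ^ s) = ↑(s * m) := by
  rw [emultiplicity_pow prime_X, hp, Nat.cast_mul]

lemma powCorank_one_le (hru : r ≤ u) (ha : emultiplicity X a = i) :
    powCorank F u r hru a g h b 1 ≤ u - r + i := by
  obtain ⟨-, -, -, hA, -⟩ := (le_powCorank_iff u r hru a g h b 1 _).1 le_rfl
  rw [pow_one] at hA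
  exact le_add_of_pow_dvd_pow_mul prime_X ha hA

lemma pow_dvd_det_of_le_powCorank_one (hru : r ≤ u) (hd : d ≤ powCorank F u r hru a g h b 1) :
    X ^ d ∣ a * b - X ^ r * g * h := by
  simpa only [pow_one] using ((le_powCorank_iff u r hru a g h b 1 d).1 hd).2.2.2.2.2

lemma powCorank_add_two_le_of_lt (hru : r ≤ u) (ha : emultiplicity X a = i) (hb : X ^ e ∣ b)
    (hei : e ≤ i) (her : 2 * e ≤ r) {s : ℕ} (hs : (s + 2) * i < r + s * e) :
    powCorank F u r hru a g h b (s + 2) ≤ u - r + (s + 2) * i := by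
  obtain ⟨-, -, -, hA, -⟩ := (le_powCorank_iff u r hru a g h b (s + 2) _).1 le_rfl
  have ha' : X ^ e ∣ a := (pow_dvd_pow X hei).trans (pow_dvd_of_le_emultiplicity ha.ge)
  have ht : X ^ r ∣ X ^ r * g * h := mul_assoc (X ^ r) g h ▸ dvd_mul_right _ _
  exact le_add_of_pow_dvd_pow_mul prime_X (emultiplicity_eq_of_pow_succ_dvd_sub
    (emultiplicity_X_pow_of_eq ha _) ((pow_dvd_pow X hs).trans
      (pow_dvd_rescaledMatrix_pow_sub_pow ha' hb ht her s))) hA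

section BSmallest

variable (hru : r ≤ u) (ha : X ^ (j + 1) ∣ a) (hb : emultiplicity X b = j) (hjr : 2 * j < r)
include ha hb hjr

lemma emultiplicity_rescaledMatrix_pow_succ (s : ℕ) :
    emultiplicity X ((rescaledMatrix a b (X ^ r * g * h) ^ (s + 1)) 1 0) = ↑(s * j) ∧
      emultiplicity X ((rescaledMatrix a b (X ^ r * g * h) ^ (s + 1)) 1 1) = ↑((s + 1) * j) := by
  have ht : X ^ (2 * j + 1) ∣ X ^ r * g * h :=
    mul_assoc (X ^ r) g h ▸ (pow_dvd_pow X hjr).mul_right _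
  obtain ⟨hp, hB⟩ := pow_dvd_rescaledMatrix_pow_succ_sub_pow ha
    (pow_dvd_of_le_emultiplicity hb.ge) ht s
  exact ⟨emultiplicity_eq_of_pow_succ_dvd_sub (emultiplicity_X_pow_of_eq hb _) hp,
    emultiplicity_eq_of_pow_succ_dvd_sub (emultiplicity_X_pow_of_eq hb _) hB⟩

lemma powCorank_add_two_le_of_emultiplicity_b (s : ℕ) :
    powCorank F u r hru a g h b (s + 2) ≤ u + (s + 2) * j := by
  obtain ⟨-, -, hB, -⟩ := (le_powCorank_iff u r hru a g h b (s + 2) _).1 le_rfl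
  exact le_add_of_pow_dvd_pow_mul prime_X
    (emultiplicity_rescaledMatrix_pow_succ ha hb hjr (s + 1)).2 hB

lemma powCorank_add_two_le_of_emultiplicity_h (hh : emultiplicity X h = η) (s : ℕ) :
    powCorank F u r hru a g h b (s + 2) ≤ u + (η + (s + 1) * j) := by
  obtain ⟨-, hp, -⟩ := (le_powCorank_iff u r hru a g h b (s + 2) _).1 le_rfl
  refine le_add_of_pow_dvd_pow_mul prime_X ?_ hp
  rw [emultiplicity_mul prime_X, hh, (emultiplicity_rescaledMatrix_pow_succ ha hb hjr (s + 1)).1,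
    Nat.cast_add]

lemma powCorank_add_two_le_of_emultiplicity_g (hg : emultiplicity X g = γ) (s : ℕ) :
    powCorank F u r hru a g h b (s + 2) ≤ u + (γ + (s + 1) * j) := by
  obtain ⟨-, -, -, -, hp, -⟩ := (le_powCorank_iff u r hru a g h b (s + 2) _).1 le_rfl
  refine le_add_of_pow_dvd_pow_mul prime_X ?_ hp
  rw [emultiplicity_mul prime_X, hg, (emultiplicity_rescaledMatrix_pow_succ ha hb hjr (s + 1)).1,
    Nat.cast_add]

lemma powCorank_add_two_le_of_emultiplicity_g_h (hi : X ^ i ∣ a) (hg : emultiplicity X g = γ)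
    (hh : emultiplicity X h = η) {s : ℕ} (hs : r + (γ + η) + s * j < (s + 2) * i) :
    powCorank F u r hru a g h b (s + 2) ≤ u - r + (r + (γ + η) + s * j) := by
  obtain ⟨-, -, -, hA, -⟩ := (le_powCorank_iff u r hru a g h b (s + 2) _).1 le_rfl
  have ht : emultiplicity X (X ^ r * g * h) = ↑(r + (γ + η)) := by
    rw [mul_assoc, emultiplicity_mul prime_X, emultiplicity_mul prime_X, hg, hh,
      emultiplicity_pow_self_of_prime prime_X, Nat.cast_add, Nat.cast_add]
  have htb : emultiplicity X (X ^ r * g * h * b ^ s) = ↑(r + (γ + η) + s * j) := by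
    rw [emultiplicity_mul prime_X, ht, emultiplicity_X_pow_of_eq hb, ← Nat.cast_add]
  have hdvd := pow_dvd_rescaledMatrix_pow_sub_pow_sub_mul_pow ha
    (pow_dvd_of_le_emultiplicity hb.ge) (pow_dvd_of_le_emultiplicity ht.ge)
    (hjr.trans_le le_self_add) s
  rw [sub_right_comm] at hdvd
  have has : X ^ (r + (γ + η) + s * j + 1) ∣ a ^ (s + 2) :=
    (pow_dvd_pow X hs).trans (pow_mul' (X : F[X]) (s + 2) i ▸ pow_dvd_pow_of_dvd hi _)
  exact le_add_of_pow_dvd_pow_mul prime_X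
    (emultiplicity_eq_of_pow_succ_dvd_sub htb ((dvd_sub_left has).1 hdvd)) hA

lemma powCorank_add_two_le_of_emultiplicity_lt (hi : X ^ i ∣ a) (hγ : γ ≤ j)
    (hg : γ < j → emultiplicity X g = γ) (hη : η ≤ j) (hh : η < j → emultiplicity X h = η) {s : ℕ}
    (hs : r + (γ + η) + s * j < (s + 2) * i) :
    powCorank F u r hru a g h b (s + 2) ≤ u + (γ + η) + s * j := by
  rcases hγ.lt_or_eq with hγ | rfl <;> rcases hη.lt_or_eq with hη | rfl
  · have := powCorank_add_two_le_of_emultiplicity_g_h hru ha hb hjr hi (hg hγ) (hh hη) hs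
    omega
  · linarith [powCorank_add_two_le_of_emultiplicity_g (h := h) hru ha hb hjr (hg hγ) s]
  · linarith [powCorank_add_two_le_of_emultiplicity_h (g := g) hru ha hb hjr (hh hη) s]
  · linarith [powCorank_add_two_le_of_emultiplicity_b (g := g) (h := h) hru ha hb hjr s]

end BSmallest

end CorankBounds

section Arithmetic

lemma twoBlockCorank_add_two_spec {k r : ℕ} (l v s : ℕ) (hk : k ≤ r) :
    (twoBlockCorank k l r v (s + 2) ≤ (s + 2) * (k + l) ∧
      twoBlockCorank k l r v (s + 2) ≤ v + (s + 2) * k ∧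
      twoBlockCorank k l r v (s + 2) ≤ v + r + s * min l (r - k) ∧
      twoBlockCorank k l r v (s + 2) ≤ 2 * v + r) ∧
    (twoBlockCorank k l r v (s + 2) = (s + 2) * (k + l) ∨
      twoBlockCorank k l r v (s + 2) = v + (s + 2) * k ∨
      twoBlockCorank k l r v (s + 2) = v + r + s * min l (r - k) ∨
      twoBlockCorank k l r v (s + 2) = 2 * v + r) := by
  have h : v + r + s * min l (r - k) =
      v + (r - min l (r - k) + (s + 2 - 1) * min l (r - k)) := by
    rw [show s + 2 - 1 = s + 1 from rfl, Nat.succ_mul]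
    omega
  rw [h]
  exact min_min_min_spec _ _ _ _

lemma succ_mul_le_of_twoBlockCorank_eq {k l r v q : ℕ}
    (hq : twoBlockCorank k l r v (q + 1) = (q + 1) * (k + l)) : (q + 1) * l ≤ v := by
  have : twoBlockCorank k l r v (q + 1) ≤ v + (q + 1) * k :=
    (min_le_left _ _).trans (min_le_right _ _)
  rw [hq, mul_add] at this
  omega

/-- `q + 1` is the last exponent `s` at which the corank `twoBlockCorank k l r v s` still has its
largest possible value `s * (k + l)`. -/
structure IsBreak (k l r v q : ℕ) : Prop where
  eq : twoBlockCorank k l r v (q + 1) = (q + 1) * (k + l)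
  lt : twoBlockCorank k l r v (q + 2) < (q + 2) * (k + l)

lemma exists_isBreak {k l r v : ℕ} (hk : k ≤ r) (hl : 1 ≤ l) (hlv : l ≤ v) :
    ∃ q, IsBreak k l r v q := by
  have hex : ∃ q, twoBlockCorank k l r v (q + 2) < (q + 2) * (k + l) := by
    refine ⟨2 * v + r, ((twoBlockCorank_add_two_spec l v _ hk).1.2.2.2).trans_lt ?_⟩
    nlinarith
  classical
  refine ⟨Nat.find hex, ?_, Nat.find_spec hex⟩
  rcases hfind : Nat.find hex with _ | q
  · rw [zero_add, twoBlockCorank_one l v hk, min_eq_left hlv, one_mul]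
  · exact (not_lt.1 (Nat.find_min hex (m := q) (by omega))).antisymm'
      (twoBlockCorank_add_two_spec l v q hk).1.1

namespace IsBreak

variable {k l r v q : ℕ}

lemma spec (h : IsBreak k l r v q) (hk : k ≤ r) (hl : 1 ≤ l) :
    twoBlockCorank k l r v (q + 2) < 2 * v + r ∧
      (twoBlockCorank k l r v (q + 2) = v + (q + 2) * k ∨
        twoBlockCorank k l r v (q + 2) = v + r + q * min l (r - k)) := by
  obtain ⟨⟨-, h₁, h₂, h₃⟩, hcases⟩ := twoBlockCorank_add_two_spec l v q hk
  have hlt := h.lt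
  have hv := succ_mul_le_of_twoBlockCorank_eq h.eq
  have hm : q * min l (r - k) ≤ q * l := Nat.mul_le_mul_left q (min_le_left l (r - k))
  rw [add_mul] at hv
  omega

lemma succ_lt (h : IsBreak k l r v q) (hk : k ≤ r) (hl : 1 ≤ l) :
    twoBlockCorank k l r v (q + 1 + 2) < (q + 1 + 2) * (k + l) := by
  obtain ⟨⟨-, h₁, h₂, -⟩, -⟩ := twoBlockCorank_add_two_spec l v (q + 1) hk
  have hcases := (h.spec hk hl).2
  have hlt := h.lt
  simp only [add_mul, mul_add] at *
  omega

end IsBreak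

variable {k l r v i j e φ q : ℕ}

lemma IsBreak.le_of_lower_bound (hq : IsBreak k l r v q) (hk : k ≤ r) (hl : 1 ≤ l) (hki : k < i)
    (hlower : min (min ((q + 2) * (k + l)) (v + (q + 2) * i)) (min (v + r + φ + q * e) (2 * v + r))
      ≤ twoBlockCorank k l r v (q + 2)) :
    v + r + φ + q * e ≤ twoBlockCorank k l r v (q + 2) := by
  obtain ⟨⟨-, hKk, -, -⟩, -⟩ := twoBlockCorank_add_two_spec l v q hk
  have hN := (hq.spec hk hl).1
  have hlt := hq.lt
  have hqk : (q + 2) * k < (q + 2) * i := Nat.mul_lt_mul_of_pos_left hki (by omega)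
  simp only [min_le_iff] at hlower
  omega

lemma min_sub_le_of_isBreak (hq : IsBreak k l r v q) (hk : k ≤ r) (hl : 1 ≤ l)
    (hij : k + min l (r - k) ≤ i + j) (he : e = min i (min j (r / 2)))
    (hlower : ∀ s, min (min ((s + 2) * (k + l)) (v + (s + 2) * i))
      (min (v + r + φ + s * e) (2 * v + r)) ≤ twoBlockCorank k l r v (s + 2))
    (hupper : 2 * j < r → j < i → ∀ s, r + φ + s * j < (s + 2) * i →
      twoBlockCorank k l r v (s + 2) ≤ v + r + φ + s * j) :
    min l (r - k) ≤ j := by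
  by_contra! hjm
  have hki : k < i := by omega
  have hφ := hq.le_of_lower_bound hk hl hki (hlower q)
  obtain ⟨⟨-, hKk, hKm, -⟩, -⟩ := twoBlockCorank_add_two_spec l v q hk
  obtain ⟨⟨-, -, hKm', -⟩, hcases⟩ := twoBlockCorank_add_two_spec l v (q + 1) hk
  have hek : e < k := by
    by_contra! hke
    have hqke : q * k ≤ q * e := Nat.mul_le_mul_left q hke
    simp only [add_mul] at hKk
    omega
  obtain rfl : e = j := by omega
  have hjr : 2 * e < r := by omega
  have hqk : (q + 2) * k < (q + 2) * i := Nat.mul_lt_mul_of_pos_left hki (by omega)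
  have hK : twoBlockCorank k l r v (q + 2) = v + r + φ + q * e :=
    (hupper hjr (by omega) q (by omega)).antisymm hφ
  -- From `q + 2` to `q + 3` the corank grows by at most `e`, but its possible slopes there are
  -- `k` and `min l (r - k)`, both larger than `e`.
  have hup := hupper hjr (by omega) (q + 1) (by simp only [add_mul, mul_add] at *; omega)
  have hlt := hq.succ_lt hk hl
  have hlv := succ_mul_le_of_twoBlockCorank_eq hq.eq
  have hml : q * min l (r - k) ≤ q * l := Nat.mul_le_mul_left q (min_le_left l (r - k))
  simp only [add_mul, mul_add] at *
  omega

lemma le_of_isBreak_of_le_min_sub (hq : IsBreak k l r v q) (hk : k ≤ r) (hl : 1 ≤ l)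
    (hij : k + min l (r - k) ≤ i + j) (he : e = min i (min j (r / 2))) (hem : e ≤ min l (r - k))
    (hupper : i < k → ∀ s, (s + 2) * i < r + s * e →
      twoBlockCorank k l r v (s + 2) ≤ v + (s + 2) * i) :
    k ≤ i := by
  by_contra! hik
  obtain rfl : e = i := by omega
  have hup := hupper hik q (by rw [add_mul]; omega)
  have hqk : q * e ≤ q * k := Nat.mul_le_mul_left q hik.le
  have hqm : q * e ≤ q * min l (r - k) := Nat.mul_le_mul_left q hem
  have hcases := (hq.spec hk hl).2
  simp only [add_mul] at hup hcases
  omega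

lemma le_of_isBreak_of_min_sub_lt (hq : IsBreak k l r v q) (hk : k ≤ r) (hl : 1 ≤ l)
    (hmi : min l (r - k) < i) (hme : min l (r - k) < e) (h₁ : i < k → k + l ≤ v + i)
    (hlower : ∀ s, min (min ((s + 2) * (k + l)) (v + (s + 2) * i))
      (min (v + r + φ + s * e) (2 * v + r)) ≤ twoBlockCorank k l r v (s + 2))
    (hupper : i < k → ∀ s, (s + 2) * i < r + s * e →
      twoBlockCorank k l r v (s + 2) ≤ v + (s + 2) * i) :
    k ≤ i := by
  by_contra! hik
  obtain ⟨⟨-, -, hKm, -⟩, -⟩ := twoBlockCorank_add_two_spec l v q hk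
  obtain ⟨hN, hcases⟩ := hq.spec hk hl
  have hlt := hq.lt
  have hqm : q * min l (r - k) ≤ q * e := Nat.mul_le_mul_left q hme.le
  have hqk : q * i ≤ q * k := Nat.mul_le_mul_left q hik.le
  have hqi : r + q * min l (r - k) ≤ (q + 2) * i := by
    by_contra! hlti
    have := hupper hik q (by omega)
    simp only [add_mul] at *
    omega
  have hv : (q + 1) * (l + 1) ≤ v := by
    rcases q with _ | q
    · omega
    have hlow := hlower (q + 1)
    have hqe : q * min l (r - k) ≤ q * e := Nat.mul_le_mul_left q hme.le
    simp only [min_le_iff] at hlow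
    have := hq.eq ▸ hupper hik q (by simp only [add_mul] at *; omega)
    have : (q + 2) * (i + 1) ≤ (q + 2) * k := Nat.mul_le_mul_left _ hik
    simp only [add_mul, mul_add] at *
    omega
  -- At `q + 3` the last three terms of the lower bound exceed `v + r + (q + 1) * min l (r - k)`.
  have hlow := hlower (q + 1)
  obtain ⟨⟨-, -, hKm', -⟩, -⟩ := twoBlockCorank_add_two_spec l v (q + 1) hk
  have hlt' := hq.succ_lt hk hl
  have hml : q * min l (r - k) ≤ q * l := Nat.mul_le_mul_left q (min_le_left l (r - k))
  simp only [min_le_iff, add_mul, mul_add] at *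
  omega

lemma le_and_min_sub_le_of_twoBlockCorank_bounds (hk : k ≤ r) (hl : 1 ≤ l) (hlv : l ≤ v)
    (hij : k + min l (r - k) ≤ i + j) (he : e = min i (min j (r / 2)))
    (h₁ : i < k → k + l ≤ v + i)
    (hlower : ∀ s, min (min ((s + 2) * (k + l)) (v + (s + 2) * i))
      (min (v + r + φ + s * e) (2 * v + r)) ≤ twoBlockCorank k l r v (s + 2))
    (hupper_a : i < k → ∀ s, (s + 2) * i < r + s * e →
      twoBlockCorank k l r v (s + 2) ≤ v + (s + 2) * i)
    (hupper_b : 2 * j < r → j < i → ∀ s, r + φ + s * j < (s + 2) * i →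
      twoBlockCorank k l r v (s + 2) ≤ v + r + φ + s * j) :
    k ≤ i ∧ min l (r - k) ≤ j := by
  obtain ⟨q, hq⟩ := exists_isBreak hk hl hlv
  refine ⟨?_, min_sub_le_of_isBreak hq hk hl hij he hlower hupper_b⟩
  rcases le_or_gt e (min l (r - k)) with hem | hem
  · exact le_of_isBreak_of_le_min_sub hq hk hl hij he hem hupper_a
  · exact le_of_isBreak_of_min_sub_lt hq hk hl (by omega) hem h₁ hlower hupper_a

end Arithmetic

section Orders

variable {F : Type*} [Field F] {u r k l : ℕ} {a g h b : F[X]}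

lemma min_le_add_of_pow_dvd_mul_sub {R : Type*} [CommRing R] [IsDomain R] {x p q c : R}
    (hx : Prime x) {i j n r : ℕ} (hp : i < r → emultiplicity x p = i)
    (hq : j < r → emultiplicity x q = j) (h : x ^ n ∣ p * q - x ^ r * c) : min n r ≤ i + j := by
  by_contra! hij
  have hmul : x ^ (i + j + 1) ∣ p * q := by
    rw [← sub_add_cancel (p * q) (x ^ r * c)]
    exact dvd_add ((pow_dvd_pow x (by omega)).trans h)
      ((pow_dvd_pow x (by omega)).trans (dvd_mul_right _ _))
  have hle := le_emultiplicity_of_pow_dvd hmul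
  rw [emultiplicity_mul hx, hp (by omega), hq (by omega)] at hle
  have : i + j + 1 ≤ i + j := by exact_mod_cast hle
  omega

lemma pow_dvd_of_powCorank_eq_twoBlockCorank (hru : r ≤ u)
    (hK : ∀ s, powCorank F u r hru a g h b s = twoBlockCorank k l r (u - r) s) (hk : k ≤ r)
    (hl : 1 ≤ l) (hlu : l ≤ u - r) :
    X ^ k ∣ a ∧ X ^ min l (r - k) ∣ b ∧ X ^ (k + l) ∣ a * b - X ^ r * g * h := by
  have hK₁ : powCorank F u r hru a g h b 1 = k + l := by
    rw [hK, twoBlockCorank_one l _ hk, min_eq_left hlu]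
  have hδ := pow_dvd_det_of_le_powCorank_one hru hK₁.ge
  obtain ⟨i, hir, hai, hi⟩ := exists_le_pow_dvd_emultiplicity X a r
  obtain ⟨j, hjr, hbj, hj⟩ := exists_le_pow_dvd_emultiplicity X b r
  have hij : k + min l (r - k) ≤ i + j := by
    have := min_le_add_of_pow_dvd_mul_sub prime_X hi hj (mul_assoc (X ^ r) g h ▸ hδ)
    omega
  obtain ⟨e, he⟩ : ∃ e, e = min i (min j (r / 2)) := ⟨_, rfl⟩
  obtain ⟨γ, hγ, hgγ, hg⟩ := exists_le_pow_dvd_emultiplicity X g e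
  obtain ⟨η, hη, hhη, hh⟩ := exists_le_pow_dvd_emultiplicity X h e
  have hbe : X ^ e ∣ b := (pow_dvd_pow X (by omega)).trans hbj
  have hlower (s : ℕ) : min (min ((s + 2) * (k + l)) (u - r + (s + 2) * i))
      (min (u - r + r + (γ + η) + s * e) (2 * (u - r) + r)) ≤
        twoBlockCorank k l r (u - r) (s + 2) := by
    rw [← hK, Nat.sub_add_cancel hru, show 2 * (u - r) + r = u + (u - r) by omega]
    exact le_powCorank_add_two hru hδ hai hbe (by omega) (by omega) hgγ hγ hhη hη s
  have hupper_a (hik : i < k) (s : ℕ) (hs : (s + 2) * i < r + s * e) :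
      twoBlockCorank k l r (u - r) (s + 2) ≤ u - r + (s + 2) * i :=
    hK (s + 2) ▸ powCorank_add_two_le_of_lt hru (hi (by omega)) hbe (by omega) (by omega) hs
  have hupper_b (hjr' : 2 * j < r) (hji : j < i) (s : ℕ)
      (hs : r + (γ + η) + s * j < (s + 2) * i) :
      twoBlockCorank k l r (u - r) (s + 2) ≤ u - r + r + (γ + η) + s * j := by
    obtain rfl : e = j := by omega
    rw [← hK, Nat.sub_add_cancel hru]
    exact powCorank_add_two_le_of_emultiplicity_lt hru ((pow_dvd_pow X hji).trans hai)
      (hj (by omega)) hjr' hai hγ hg hη hh hs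
  obtain ⟨hki, hmj⟩ := le_and_min_sub_le_of_twoBlockCorank_bounds hk hl hlu hij he
    (fun hik ↦ hK₁ ▸ powCorank_one_le hru (hi (by omega))) hlower hupper_a hupper_b
  exact ⟨(pow_dvd_pow X hki).trans hai, (pow_dvd_pow X hmj).trans hbj, hδ⟩

end Orders

section Coordinates

lemma coeff_sum_C_mul_X_pow_add {R : Type*} [Semiring R] {n : ℕ} (y : Fin n → R) (m i : ℕ) :
    (∑ j : Fin n, C (y j) * X ^ ((j : ℕ) + m)).coeff (i + m) =
      if h : i < n then y ⟨i, h⟩ else 0 := by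
  simp only [finsetSum_coeff, coeff_C_mul, coeff_X_pow, Nat.add_right_cancel_iff, mul_ite,
    mul_one, mul_zero]
  split_ifs with h
  · rw [Finset.sum_eq_single_of_mem ⟨i, h⟩ (Finset.mem_univ _) fun j _ hj ↦
      if_neg fun hij ↦ hj (Fin.ext hij.symm), if_pos rfl]
  · exact Finset.sum_eq_zero fun j _ ↦ if_neg (by omega)

variable {F : Type*} [Field F] {u r : ℕ}

lemma eval_Av (x : Vars u r → F) {i : ℕ} (hi : 1 ≤ i) :
    MvPolynomial.eval x (Av F u r i) = (paOf F u r x).coeff i := by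
  rw [paOf, ← Nat.sub_add_cancel hi, coeff_sum_C_mul_X_pow_add, Av, Nat.add_sub_cancel]
  split_ifs <;> simp

lemma eval_Bv (x : Vars u r → F) {i : ℕ} (hi : 1 ≤ i) :
    MvPolynomial.eval x (Bv F u r i) = (pbOf F u r x).coeff i := by
  rw [pbOf, ← Nat.sub_add_cancel hi, coeff_sum_C_mul_X_pow_add, Bv, Nat.add_sub_cancel]
  split_ifs <;> simp

lemma eval_Gv (x : Vars u r → F) (i : ℕ) :
    MvPolynomial.eval x (Gv F u r i) = (pgOf F u r x).coeff i := by
  refine Eq.trans ?_ (coeff_sum_C_mul_X_pow_add _ 0 i).symm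
  rw [Gv]
  split_ifs <;> simp

lemma eval_Hv (x : Vars u r → F) (i : ℕ) :
    MvPolynomial.eval x (Hv F u r i) = (phOf F u r x).coeff i := by
  refine Eq.trans ?_ (coeff_sum_C_mul_X_pow_add _ 0 i).symm
  rw [Hv]
  split_ifs <;> simp

lemma sum_coeff_mul_sub_sum_coeff_mul_eq_zero {R : Type*} [CommRing R] {k r n m : ℕ}
    (hkr : k ≤ r) {a b g h : R[X]} (ha : X ^ k ∣ a) (hb : X ^ (r - k) ∣ b)
    (hδ : X ^ n ∣ a * b - X ^ r * g * h) (hm : r + m < n) :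
    (∑ j ∈ Finset.range (m + 1), a.coeff (k + j) * b.coeff (r - k + m - j)) -
      ∑ j ∈ Finset.range (m + 1), g.coeff j * h.coeff (m - j) = 0 := by
  obtain ⟨a, rfl⟩ := ha
  obtain ⟨b, rfl⟩ := hb
  have hfactor : X ^ k * a * (X ^ (r - k) * b) - X ^ r * g * h = X ^ r * (a * b - g * h) := by
    rw [← Nat.add_sub_cancel' hkr, Nat.add_sub_cancel_left, pow_add]
    ring
  rw [hfactor] at hδ
  rw [← X_pow_dvd_iff.1 hδ (r + m) hm, add_comm r m, coeff_X_pow_mul, coeff_sub, coeff_mul,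
    coeff_mul, Finset.Nat.sum_antidiagonal_eq_sum_range_succ fun i j ↦ a.coeff i * b.coeff j,
    Finset.Nat.sum_antidiagonal_eq_sum_range_succ fun i j ↦ g.coeff i * h.coeff j]
  congr 1
  refine Finset.sum_congr rfl fun j hj ↦ ?_
  rw [show r - k + m - j = m - j + (r - k) by have := Finset.mem_range.1 hj; omega, add_comm k,
    coeff_X_pow_mul, coeff_X_pow_mul]

lemma mem_Xlocus_of_pow_dvd {k l : ℕ} {x : Vars u r → F} (hk : 1 ≤ k) (hkr : k < r)
    (ha : X ^ k ∣ paOf F u r x) (hb : X ^ min l (r - k) ∣ pbOf F u r x)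
    (hδ : X ^ (k + l) ∣ paOf F u r x * pbOf F u r x - X ^ r * pgOf F u r x * phOf F u r x) :
    x ∈ Xlocus F u r k l := by
  have hA (i : ℕ) (hi : 1 ≤ i) (hik : i ≤ k - 1) : MvPolynomial.eval x (Av F u r i) = 0 :=
    (eval_Av x hi).trans (X_pow_dvd_iff.1 ha i (by omega))
  have hB (i : ℕ) (hi : 1 ≤ i) (him : i < min l (r - k)) :
      MvPolynomial.eval x (Bv F u r i) = 0 :=
    (eval_Bv x hi).trans (X_pow_dvd_iff.1 hb i him)
  intro p hp
  unfold Eset at hp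
  split_ifs at hp with hkl
  · rcases hp with ⟨i, hi, hik, rfl⟩ | ⟨i, hi, hil, rfl⟩
    · exact hA i hi hik
    · exact hB i hi (by omega)
  · rcases hp with (⟨i, hi, hik, rfl⟩ | ⟨i, hi, hir, rfl⟩) | ⟨m, hm, rfl⟩
    · exact hA i hi hik
    · exact hB i hi (by omega)
    · rw [min_eq_right (by omega)] at hb
      simp only [map_sub, map_sum, map_mul, eval_Gv]
      rw [← sum_coeff_mul_sub_sum_coeff_mul_eq_zero hkr.le ha hb hδ (m := m) (by omega)]
      congr 1
      · refine Finset.sum_congr rfl fun j hj ↦ ?_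
        have := Finset.mem_range.1 hj
        rw [eval_Av x (by omega), eval_Bv x (by omega)]
      · simp only [eval_Hv]

end Coordinates

theorem statement7_general (F : Type*) [Field F] (u r k l : ℕ) (hru : r < u) (hk1 : 1 ≤ k)
    (hk2 : k ≤ r - 1) (hl1 : 1 ≤ l) (hl2 : l ≤ u - r) (P : Multiset ℕ) (hPpos : 0 ∉ P)
    (hcode : burgeCode P =
      List.replicate (u - r - l) false ++ List.replicate l true ++
        List.replicate (r - k) false ++ List.replicate k true ++ [false])
    (x : Vars u r → F) (hx : JordanTypeIs F (Mx F u r hru.le x) P) :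
    x ∈ Xlocus F u r k l := by
  have hblocks : burgeCode P = blockWord l (u - r) ++ (blockWord k r ++ [false]) := by
    simp only [hcode, blockWord, min_eq_right hl2, min_eq_right (show k ≤ r by omega),
      List.append_assoc]
  have hcorank (s : ℕ) : powCorank F u r hru.le (paOf F u r x) (pgOf F u r x) (phOf F u r x)
      (pbOf F u r x) s = twoBlockCorank k l r (u - r) s :=
    (hx s).trans (minSum_of_burgeCode_eq_blockWord_append (by omega) hPpos hblocks s)
  obtain ⟨ha, hb, hδ⟩ :=
    pow_dvd_of_powCorank_eq_twoBlockCorank hru.le hcorank (by omega) hl1 hl2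
  exact mem_Xlocus_of_pow_dvd hk1 (by omega) ha hb hδ

/-- If the Jordan type of `M_x` is the partition `P` whose Burge code is
`α^{u−r−l} β^l α^{r−k} β^k α`, then `x` lies in the zero locus `X^Q_{k,l}` of `E^Q_{k,l}`.
(`false = α`, `true = β`.) -/
theorem statement7 (F : Type*) [Field F] [Infinite F] (u r k l : ℕ)
    (hru : r < u) (hr : 2 ≤ r) (hk1 : 1 ≤ k) (hk2 : k ≤ r - 1)
    (hl1 : 1 ≤ l) (hl2 : l ≤ u - r)
    (P : Multiset ℕ) (hPpos : 0 ∉ P)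
    (hcode : burgeCode P =
      List.replicate (u - r - l) false ++ List.replicate l true ++
        List.replicate (r - k) false ++ List.replicate k true ++ [false])
    (x : Vars u r → F) (hx : JordanTypeIs F (Mx F u r hru.le x) P) :
    x ∈ Xlocus F u r k l :=
  statement7_general F u r k l hru hk1 hk2 hl1 hl2 P hPpos hcode x hx
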